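/- arXiv:1611.06979 — 3 statements merged into one kernel-verified Lean document; each statement's English description precedes it below -/
import Mathlib

section
/- For 1 ≤ k ≤ n, the number of 321-avoiding permutations π ∈ S_n such that the last descent of π⁻¹ equals n−k is the ballot number C_{n,k} = binom(2n−k−1, n−1) − binom(2n−k−1, n). -/
/-- A permutation avoids the pattern 321 if it has no decreasing subsequence of length 3. -/
def Avoids321 {n : ℕ} (π : Equiv.Perm (Fin n)) : Prop :=
  ∀ i j k : Fin n, i < j → j < k → ¬ (π k < π j ∧ π j < π i)

/-- The set of positions of left-to-right maxima of a permutation. -/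
def LtrSet {n : ℕ} (π : Equiv.Perm (Fin n)) : Finset (Fin n) :=
  Finset.univ.filter (fun i => ∀ j, j ≤ i → π j ≤ π i)

/-- The block number of a permutation (0-based version of
`|{1 ≤ i ≤ n : π(j) ≤ i for all j ≤ i}|`). -/
def blockNum {n : ℕ} (π : Equiv.Perm (Fin n)) : ℕ :=
  (Finset.univ.filter (fun i : Fin n => ∀ j, j ≤ i → π j ≤ i)).card

/-- The descent set of a permutation, as a set of 1-based positions in `[n-1]`. -/
def DesSet {n : ℕ} (π : Equiv.Perm (Fin n)) : Finset ℕ :=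
  Finset.image (fun i : Fin n => (i : ℕ) + 1)
    (Finset.univ.filter (fun i : Fin n => ∃ h : (i : ℕ) + 1 < n, π ⟨(i : ℕ) + 1, h⟩ < π i))

/-- The last descent of a permutation (`0` if there is no descent). -/
def ldes {n : ℕ} (π : Equiv.Perm (Fin n)) : ℕ := (DesSet π).sup id

def IncFrom {n : ℕ} (σ : Equiv.Perm (Fin n)) (m : ℕ) : Prop :=
  ∀ i j : Fin n, m ≤ (i : ℕ) → i < j → σ i < σ j

theorem ldes_le_iff {n : ℕ} (σ : Equiv.Perm (Fin n)) (m : ℕ) :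
    ldes σ ≤ m ↔ IncFrom σ m := by
  have h0 : ldes σ ≤ m ↔
      ∀ i : Fin n, ∀ h : (i : ℕ) + 1 < n, σ ⟨(i : ℕ) + 1, h⟩ < σ i → (i : ℕ) + 1 ≤ m := by
    simp only [ldes, DesSet, Finset.sup_le_iff, Finset.mem_image, Finset.mem_filter,
      Finset.mem_univ, true_and, id]
    constructor
    · intro H i h hi
      exact H _ ⟨i, ⟨h, hi⟩, rfl⟩
    · rintro H b ⟨i, ⟨h, hi⟩, rfl⟩
      exact H i h hi
  rw [h0]
  constructor
  · intro H i j hi hij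
    have key : ∀ d : ℕ, ∀ h : (i : ℕ) + d + 1 < n, σ i < σ ⟨(i : ℕ) + d + 1, h⟩ := by
      have step : ∀ a : ℕ, ∀ h : a + 1 < n, m ≤ a → σ ⟨a, by omega⟩ < σ ⟨a + 1, h⟩ := by
        intro a h ha
        by_contra hc
        have hne : σ ⟨a + 1, h⟩ ≠ σ ⟨a, by omega⟩ := by
          intro he
          have := σ.injective he
          simp at this
        have := H ⟨a, by omega⟩ h (lt_of_le_of_ne (not_lt.mp hc) hne)
        simp at this
        omega
      intro d
      induction d with
      | zero => intro h; exact step i h hi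
      | succ d ih =>
        intro h
        exact (ih (by omega)).trans (step (i + d + 1) h (by omega))
    have hij' : (i : ℕ) < j := hij
    have := key ((j : ℕ) - i - 1) (by omega)
    have e : (⟨(i : ℕ) + ((j : ℕ) - i - 1) + 1, by omega⟩ : Fin n) = j := by
      ext; simp; omega
    rwa [e] at this
  · intro H i h hi
    by_contra hc
    have := H i ⟨(i : ℕ) + 1, h⟩ (by omega) (by simp [Fin.lt_def])
    exact absurd hi (not_lt.mpr this.le)

def insMax {n : ℕ} (p : Fin (n + 1)) (σ : Equiv.Perm (Fin n)) : Equiv.Perm (Fin (n + 1)) :=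
  ((finSuccEquiv' p).trans (Equiv.optionCongr σ)).trans (finSuccEquiv' (Fin.last n)).symm

theorem insMax_self {n : ℕ} (p : Fin (n + 1)) (σ : Equiv.Perm (Fin n)) :
    insMax p σ p = Fin.last n := by
  simp [insMax]

theorem insMax_succAbove {n : ℕ} (p : Fin (n + 1)) (σ : Equiv.Perm (Fin n)) (i : Fin n) :
    insMax p σ (p.succAbove i) = (σ i).castSucc := by
  simp [insMax]

theorem insMax_bijective (n : ℕ) :
    Function.Bijective (fun x : Fin (n + 1) × Equiv.Perm (Fin n) => insMax x.1 x.2) := by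
  rw [Fintype.bijective_iff_injective_and_card]
  constructor
  · rintro ⟨p, σ⟩ ⟨q, τ⟩ h
    simp only at h
    have hp : p = q := by
      apply (insMax q τ).injective
      rw [insMax_self, ← h, insMax_self]
    subst hp
    have : σ = τ := by
      ext i
      have := insMax_succAbove p σ i
      rw [h, insMax_succAbove] at this
      have := congrArg Fin.val this
      simpa using this.symm
    rw [this]
  · simp [Fintype.card_perm, Nat.factorial_succ]

theorem avoids_insMax {n : ℕ} (p : Fin (n + 1)) (σ : Equiv.Perm (Fin n)) :
    Avoids321 (insMax p σ) ↔ Avoids321 σ ∧ IncFrom σ p := by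
  constructor
  · intro H
    refine ⟨?_, ?_⟩
    · intro i j k hij hjk
      have := H (p.succAbove i) (p.succAbove j) (p.succAbove k)
        (Fin.succAbove_lt_succAbove_iff.mpr hij) (Fin.succAbove_lt_succAbove_iff.mpr hjk)
      simpa [insMax_succAbove] using this
    · intro i j hi hij
      have := H p (p.succAbove i) (p.succAbove j)
        ((Fin.lt_succAbove_iff_le_castSucc _ _).mpr (by simpa [Fin.le_def] using hi))
        (Fin.succAbove_lt_succAbove_iff.mpr hij)
      simp only [insMax_succAbove, insMax_self, Fin.castSucc_lt_castSucc_iff,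
        Fin.castSucc_lt_last, and_true, not_lt] at this
      exact lt_of_le_of_ne this (fun h => hij.ne (σ.injective h))
  · rintro ⟨H1, H2⟩
    unfold Avoids321
    rw [Fin.forall_iff_succAbove p]
    have L : ∀ x : Fin (n+1), ¬ Fin.last n < x := fun x => not_lt.mpr (Fin.le_last x)
    constructor
    · intro j k hj hk
      obtain ⟨j, rfl⟩ := Fin.exists_succAbove_eq hj.ne'
      obtain ⟨k, rfl⟩ := Fin.exists_succAbove_eq (hj.trans hk).ne'
      have h1 := (Fin.lt_succAbove_iff_le_castSucc _ _).mp hj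
      have := H2 j k (by simpa [Fin.le_def] using h1) (Fin.succAbove_lt_succAbove_iff.mp hk)
      simp [insMax_succAbove, insMax_self, this.le]
    · intro i
      rw [Fin.forall_iff_succAbove p]
      constructor
      · intro k _ _
        simp [insMax_self, L]
      · intro j
        rw [Fin.forall_iff_succAbove p]
        constructor
        · intro _ _
          simp [insMax_self, L]
        · intro k hij hjk
          simpa [insMax_succAbove] using H1 i j k (Fin.succAbove_lt_succAbove_iff.mp hij)
            (Fin.succAbove_lt_succAbove_iff.mp hjk)

theorem inc_insMax {n : ℕ} (p : Fin (n + 1)) (σ : Equiv.Perm (Fin n)) (m : ℕ)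
    (hσ : IncFrom σ p) :
    IncFrom (insMax p σ) m ↔ (p = Fin.last n ∧ IncFrom σ m) ∨ (p : ℕ) < m := by
  constructor
  · intro H
    by_cases hp : (p : ℕ) < m
    · exact Or.inr hp
    left
    have hl : p = Fin.last n := by
      by_contra hne
      have := H p (Fin.last n) (by omega) (lt_of_le_of_ne (Fin.le_last p) hne)
      rw [insMax_self] at this
      exact absurd this (not_lt.mpr (Fin.le_last _))
    refine ⟨hl, ?_⟩
    subst hl
    intro i j hi hij
    have := H (Fin.succAbove (Fin.last n) i) (Fin.succAbove (Fin.last n) j) (by simpa using hi)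
      (Fin.succAbove_lt_succAbove_iff.mpr hij)
    simpa only [insMax_succAbove, Fin.castSucc_lt_castSucc_iff] using this
  · rintro (⟨rfl, H⟩ | hp)
    · intro i j hi hij
      obtain ⟨i, rfl⟩ := Fin.exists_succAbove_eq (lt_of_lt_of_le hij (Fin.le_last j)).ne
      by_cases hj : j = Fin.last n
      · subst hj
        rw [insMax_self, insMax_succAbove]
        exact Fin.castSucc_lt_last _
      · obtain ⟨j, rfl⟩ := Fin.exists_succAbove_eq hj
        rw [insMax_succAbove, insMax_succAbove, Fin.castSucc_lt_castSucc_iff]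
        exact H i j (by simpa using hi) (Fin.succAbove_lt_succAbove_iff.mp hij)
    · intro i j hi hij
      have hpi : p < i := by rw [Fin.lt_def]; omega
      obtain ⟨i, rfl⟩ := Fin.exists_succAbove_eq hpi.ne'
      obtain ⟨j, rfl⟩ := Fin.exists_succAbove_eq (hpi.trans hij).ne'
      rw [insMax_succAbove, insMax_succAbove, Fin.castSucc_lt_castSucc_iff]
      have h1 := (Fin.lt_succAbove_iff_le_castSucc _ _).mp hpi
      exact hσ i j (by simpa [Fin.le_def] using h1) (Fin.succAbove_lt_succAbove_iff.mp hij)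

open Classical in
noncomputable def cntP (n m : ℕ) : ℕ :=
  (Finset.univ.filter (fun σ : Equiv.Perm (Fin n) => Avoids321 σ ∧ IncFrom σ m)).card

theorem incFrom_big {n : ℕ} (σ : Equiv.Perm (Fin n)) (m : ℕ) (h : n ≤ m + 1) :
    IncFrom σ m := by
  intro i j hi hij
  have : (i : ℕ) < j := hij
  omega

theorem incFrom_mono {n : ℕ} (σ : Equiv.Perm (Fin n)) {m m' : ℕ} (h : m ≤ m')
    (H : IncFrom σ m) : IncFrom σ m' :=
  fun i j hi hij => H i j (h.trans hi) hij

open Classical in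
theorem cntP_succ (n m : ℕ) (hm : m ≤ n) :
    cntP (n + 1) m = (∑ p ∈ Finset.range m, cntP n p) + cntP n m := by
  have h1 : cntP (n + 1) m = ∑ p : Fin (n + 1),
      (Finset.univ.filter (fun σ : Equiv.Perm (Fin n) =>
        (Avoids321 σ ∧ IncFrom σ p) ∧
          ((p = Fin.last n ∧ IncFrom σ m) ∨ (p : ℕ) < m))).card := by
    unfold cntP
    rw [← Fintype.card_subtype]
    have e : Fintype.card {σ : Equiv.Perm (Fin (n + 1)) // Avoids321 σ ∧ IncFrom σ m} =
      Fintype.card {x : Fin (n + 1) × Equiv.Perm (Fin n) //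
        Avoids321 (insMax x.1 x.2) ∧ IncFrom (insMax x.1 x.2) m} :=
      (Fintype.card_congr ((Equiv.ofBijective _ (insMax_bijective n)).subtypeEquiv
        (fun x => Iff.rfl))).symm
    rw [e, Fintype.card_subtype, Finset.card_filter, Fintype.sum_prod_type]
    refine Finset.sum_congr rfl fun p _ => ?_
    rw [Finset.card_filter]
    refine Finset.sum_congr rfl fun σ _ => ?_
    refine if_congr ?_ rfl rfl
    rw [avoids_insMax]
    exact and_congr_right fun h => inc_insMax p σ m h.2
  rw [h1, Fin.sum_univ_castSucc]
  congr 1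
  · have h2 : ∀ p : Fin n, (Finset.univ.filter (fun σ : Equiv.Perm (Fin n) =>
        (Avoids321 σ ∧ IncFrom σ p.castSucc) ∧
          ((p.castSucc = Fin.last n ∧ IncFrom σ m) ∨ (p.castSucc : ℕ) < m))).card =
          if (p : ℕ) < m then cntP n p else 0 := by
      intro p
      split_ifs with hp
      · simp [cntP, hp]
      · simp [hp, (Fin.castSucc_lt_last p).ne]
    rw [Finset.sum_congr rfl (fun p _ => h2 p),
      Fin.sum_univ_eq_sum_range (fun p => if p < m then cntP n p else 0), ← Finset.sum_filter]
    refine Finset.sum_congr ?_ fun _ _ => rfl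
    ext x; simp; omega
  · unfold cntP
    congr 1
    apply Finset.filter_congr
    intro σ _
    have := incFrom_big σ n (by omega)
    simp [this, not_lt.mpr hm]

theorem cntP_zero (n : ℕ) : cntP n 0 = 1 := by
  induction n with
  | zero =>
    classical
    unfold cntP
    rw [Finset.filter_true_of_mem]
    · simp
    · intro σ _
      exact ⟨fun i => i.elim0, fun i => i.elim0⟩
  | succ n ih => rw [cntP_succ n 0 (by omega), ih]; simp

theorem cntP_rec (n m : ℕ) (hm : m + 1 ≤ n) :
    cntP (n + 1) (m + 1) = cntP (n + 1) m + cntP n (m + 1) := by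
  rw [cntP_succ n (m + 1) hm, cntP_succ n m (by omega), Finset.sum_range_succ]

theorem cntP_diag (n : ℕ) : cntP (n + 1) (n + 1) = cntP (n + 1) n := by
  unfold cntP
  congr 1
  ext σ
  simp [incFrom_big σ n le_rfl, incFrom_big σ (n + 1) (by omega)]

theorem cntP_formula (n : ℕ) : ∀ m, m ≤ n →
    cntP n m + Nat.choose (n + m) (n + 1) = Nat.choose (n + m) n := by
  induction n with
  | zero => intro m hm; obtain rfl : m = 0 := by omega
            simp [cntP_zero]
  | succ n ih =>
    intro m
    induction m with
    | zero => intro _; simp [cntP_zero]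
    | succ m ihm =>
      intro hm
      have a := ihm (by omega)
      have e : n + 1 + (m + 1) = (n + 1 + m) + 1 := by ring
      rw [e, Nat.choose_succ_succ (n + 1 + m) (n + 1), Nat.choose_succ_succ (n + 1 + m) n]
      rcases Nat.lt_or_ge n (m + 1) with h | h
      · obtain rfl : m = n := by omega
        rw [cntP_diag]
        have : Nat.choose (m + 1 + m) (m + 1) = Nat.choose (m + 1 + m) m :=
          Nat.choose_symm_add
        simp only [Nat.succ_eq_add_one] at *
        omega
      · rw [cntP_rec n m h]
        have b := ih (m + 1) h
        rw [show n + (m + 1) = n + 1 + m by ring] at b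
        simp only [Nat.succ_eq_add_one] at *
        omega

theorem avoids_inv {n : ℕ} (σ : Equiv.Perm (Fin n)) (h : Avoids321 σ) : Avoids321 σ⁻¹ := by
  intro i j k hij hjk ⟨h1, h2⟩
  exact h _ _ _ h1 h2 (by simpa using ⟨hij, hjk⟩)

open Classical in
theorem card_eq_filter (n m : ℕ) :
    Nat.card {π : Equiv.Perm (Fin n) // Avoids321 π ∧ ldes π⁻¹ = m} =
      (Finset.univ.filter (fun σ : Equiv.Perm (Fin n) => Avoids321 σ ∧ ldes σ = m)).card := by
  rw [← Fintype.card_subtype, ← Nat.card_eq_fintype_card]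
  refine Nat.card_congr ((Equiv.inv (Equiv.Perm (Fin n))).subtypeEquiv fun π => ?_)
  simp only [Equiv.inv_apply]
  exact and_congr_left fun _ => ⟨avoids_inv π, fun h => by simpa using avoids_inv _ h⟩

open Classical in
theorem filter_add (n m : ℕ) :
    cntP n (m + 1) = cntP n m +
      (Finset.univ.filter (fun σ : Equiv.Perm (Fin n) =>
        Avoids321 σ ∧ ldes σ = m + 1)).card := by
  unfold cntP
  rw [← Finset.card_union_of_disjoint]
  · congr 1
    ext σ
    simp only [Finset.mem_union, Finset.mem_filter, Finset.mem_univ, true_and, ← ldes_le_iff]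
    rw [← and_or_left]
    exact and_congr_right fun _ => by omega
  · rw [Finset.disjoint_filter]
    rintro σ _ ⟨_, h⟩ ⟨_, h'⟩
    rw [← ldes_le_iff] at h
    omega

/-- The number of 321-avoiding permutations in `S_n` whose inverse has last descent
`n - k` is the ballot number `C_{n,k}`. -/
theorem card_avoids321_ldes_inv (n k : ℕ) (h1 : 1 ≤ k) (h2 : k ≤ n) :
    Nat.card {π : Equiv.Perm (Fin n) // Avoids321 π ∧ ldes π⁻¹ = n - k} =
      Nat.choose (2 * n - k - 1) (n - 1) - Nat.choose (2 * n - k - 1) n := by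
  classical
  rw [card_eq_filter]
  obtain ⟨N, rfl⟩ : ∃ N, n = N + 1 := ⟨n - 1, by omega⟩
  rcases Nat.lt_or_ge k (N + 1) with h | h
  · obtain ⟨m, hm⟩ : ∃ m, N + 1 - k = m + 1 := ⟨N - k, by omega⟩
    have a := filter_add (N + 1) m
    have b := cntP_rec N m (by omega)
    have c := cntP_formula N (m + 1) (by omega)
    rw [hm, show 2 * (N + 1) - k - 1 = N + (m + 1) by omega, Nat.add_sub_cancel]
    have a' : (Finset.univ.filter (fun σ : Equiv.Perm (Fin (N + 1)) =>
        Avoids321 σ ∧ ldes σ = m + 1)).card = cntP N (m + 1) := by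
      omega
    have d := Eq.trans (by congr) a'
    rw [d]
    omega
  · obtain rfl : k = N + 1 := by omega
    have a := cntP_zero (N + 1)
    rw [show 2 * (N + 1) - (N + 1) - 1 = N by omega, Nat.add_sub_cancel, Nat.sub_self]
    simp only [Nat.choose_self, Nat.choose_succ_self, Nat.sub_zero]
    refine Eq.trans ?_ a
    unfold cntP
    refine congrArg Finset.card ?_
    ext σ
    simp only [Finset.mem_filter, Finset.mem_univ, true_and, ← ldes_le_iff, Nat.le_zero]
end

section
/- For 1 ≤ k ≤ n, the number of 321-avoiding permutations π ∈ S_n with exactly k blocks equals the ballot number C_{n,k} = binom(2n−k−1, n−1) − binom(2n−k−1, n). -/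
/-- running maximum -/
def rmax {n : ℕ} (π : Equiv.Perm (Fin n)) (i : Fin n) : ℕ :=
  (Finset.Iic i).sup (fun j => (π j : ℕ))

theorem rmax_ge {n : ℕ} (π : Equiv.Perm (Fin n)) {i j : Fin n} (h : j ≤ i) :
    (π j : ℕ) ≤ rmax π i :=
  Finset.le_sup (f := fun j => (π j : ℕ)) (Finset.mem_Iic.2 h)

theorem rmax_mem {n : ℕ} (π : Equiv.Perm (Fin n)) (i : Fin n) :
    ∃ j ≤ i, (π j : ℕ) = rmax π i := by
  obtain ⟨j, hj, h⟩ := Finset.exists_mem_eq_sup (Finset.Iic i) ⟨i, by simp⟩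
    (fun j => (π j : ℕ))
  exact ⟨j, by simpa using hj, h.symm⟩

theorem rmax_mono {n : ℕ} (π : Equiv.Perm (Fin n)) : Monotone (rmax π) := by
  intro a b h
  obtain ⟨j, hj, e⟩ := rmax_mem π a
  rw [← e]
  exact rmax_ge π (hj.trans h)

theorem le_rmax {n : ℕ} (π : Equiv.Perm (Fin n)) (i : Fin n) : (i : ℕ) ≤ rmax π i := by
  have h : ((Finset.Iic i).image (fun j => (π j : ℕ))).card ≤
      (Finset.range (rmax π i + 1)).card := by
    apply Finset.card_le_card
    intro x hx
    simp only [Finset.mem_image, Finset.mem_Iic] at hx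
    obtain ⟨j, hj, rfl⟩ := hx
    have := rmax_ge π hj
    simp; omega
  rw [Finset.card_image_of_injective] at h
  · simp at h; omega
  · intro a b hab
    exact π.injective (Fin.ext hab)

theorem rmax_lt {n : ℕ} (π : Equiv.Perm (Fin n)) (i : Fin n) : rmax π i < n := by
  obtain ⟨j, hj, e⟩ := rmax_mem π i
  rw [← e]; exact (π j).2

theorem blockNum_eq {n : ℕ} (π : Equiv.Perm (Fin n)) :
    blockNum π = (Finset.univ.filter (fun i : Fin n => rmax π i = i)).card := by
  unfold blockNum
  congr 1
  ext i
  simp only [Finset.mem_filter, Finset.mem_univ, true_and]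
  constructor
  · intro h
    obtain ⟨j, hj, e⟩ := rmax_mem π i
    have := le_rmax π i
    have h2 := h j hj
    rw [Fin.le_def] at h2
    omega
  · intro h j hj
    have := rmax_ge π hj
    rw [Fin.le_def]; omega

theorem rmax_aux {n : ℕ} {π σ : Equiv.Perm (Fin n)} (hσ : Avoids321 σ)
    (h : rmax π = rmax σ) (i : Fin n) (ih : ∀ j < i, π j = σ j) : ¬ (π i < σ i) := by
  intro hlt
  obtain ⟨l, hl⟩ := σ.surjective (π i)
  have hil : i < l := by
    rcases lt_trichotomy l i with h1 | h1 | h1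
    · have := ih l h1
      rw [hl] at this
      exact absurd (π.injective this) h1.ne
    · subst h1; rw [hl] at hlt; exact absurd hlt (lt_irrefl _)
    · exact h1
  obtain ⟨j, hj, e⟩ := rmax_mem π i
  have h3 := rmax_ge σ (le_refl i)
  rw [← h] at h3
  have hji : j < i := by
    rcases hj.lt_or_eq with h1 | h1
    · exact h1
    · subst h1; rw [Fin.lt_def] at hlt; omega
  have h4 := ih j hji
  have hne : σ i ≠ σ j := fun hh => hji.ne' (σ.injective hh)
  refine hσ j i l hji hil ⟨by rw [hl]; exact hlt, lt_of_le_of_ne ?_ hne⟩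
  rw [← h4, Fin.le_def]; omega

theorem rmax_inj {n : ℕ} {π σ : Equiv.Perm (Fin n)} (hπ : Avoids321 π) (hσ : Avoids321 σ)
    (h : rmax π = rmax σ) : π = σ := by
  have key : ∀ m : ℕ, ∀ i : Fin n, (i : ℕ) = m → π i = σ i := by
    intro m
    induction m using Nat.strong_induction_on with
    | _ m ih =>
      intro i hi
      have ih' : ∀ j < i, π j = σ j := fun j hj => ih j (by rw [Fin.lt_def] at hj; omega) j rfl
      have h1 := rmax_aux hσ h i ih'
      have h2 := rmax_aux hπ h.symm i (fun j hj => (ih' j hj).symm)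
      exact le_antisymm (not_lt.1 h2) (not_lt.1 h1)
  exact Equiv.ext fun i => key i i rfl

theorem rmax_surj {n : ℕ} (f : Fin n → Fin n) (hf : Monotone f) (hle : ∀ i, i ≤ f i) :
    ∃ π : Equiv.Perm (Fin n), Avoids321 π ∧ ∀ i, rmax π i = f i := by
  classical
  set R : Finset (Fin n) := Finset.univ.filter (fun i => ∀ j < i, f j < f i) with hR
  have memR : ∀ i, i ∈ R ↔ ∀ j < i, f j < f i := by intro i; simp [hR]
  set V := R.image f with hV
  have hRm : ∀ a ∈ R, ∀ b ∈ R, a < b → f a < f b := fun a _ b hb hab => (memR b).1 hb a hab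
  have hinj : Set.InjOn f R := by
    intro a ha b hb hab
    rcases lt_trichotomy a b with h | h | h
    · exact absurd hab (hRm a ha b hb h).ne
    · exact h
    · exact absurd hab (hRm b hb a ha h).ne'
  have hVc : V.card = R.card := Finset.card_image_of_injOn hinj
  have hc : (Vᶜ).card = (Rᶜ).card := by rw [Finset.card_compl, Finset.card_compl, hVc]
  let e : (Rᶜ : Finset (Fin n)) ≃o (Vᶜ : Finset (Fin n)) :=
    ((Rᶜ).orderIsoOfFin rfl).symm.trans ((Vᶜ).orderIsoOfFin hc)
  have hmc : ∀ {i}, i ∉ R → i ∈ Rᶜ := fun h => Finset.mem_compl.2 h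
  let p : Fin n → Fin n := fun i => if h : i ∈ R then f i else (e ⟨i, hmc h⟩ : Fin n)
  have pR : ∀ i, i ∈ R → p i = f i := fun i h => by simp [p, h]
  have pN : ∀ i (h : i ∉ R), p i = (e ⟨i, hmc h⟩ : Fin n) := fun i h => by simp [p, h]
  have pNV : ∀ i, i ∉ R → p i ∉ V := fun i h => by
    rw [pN i h]; exact Finset.mem_compl.1 (e ⟨i, hmc h⟩).2
  have pRV : ∀ i, i ∈ R → p i ∈ V := fun i h => by
    rw [pR i h]; exact Finset.mem_image_of_mem f h
  have pNm : ∀ a b, a ∉ R → b ∉ R → a < b → p a < p b := by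
    intro a b ha hb hab
    rw [pN a ha, pN b hb]
    exact e.strictMono (show (⟨a, hmc ha⟩ : (Rᶜ : Finset (Fin n))) < ⟨b, hmc hb⟩ from hab)
  have pRm : ∀ a b, a ∈ R → b ∈ R → a < b → p a < p b := by
    intro a b ha hb hab
    rw [pR a ha, pR b hb]; exact hRm a ha b hb hab
  have pinj : Function.Injective p := by
    intro a b hab
    by_cases ha : a ∈ R <;> by_cases hb : b ∈ R
    · rcases lt_trichotomy a b with h | h | h
      · exact absurd hab (pRm a b ha hb h).ne
      · exact h
      · exact absurd hab (pRm b a hb ha h).ne'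
    · exact absurd (hab ▸ pRV a ha) (pNV b hb)
    · exact absurd (hab ▸ pRV b hb) (pNV a ha)
    · rcases lt_trichotomy a b with h | h | h
      · exact absurd hab (pNm a b ha hb h).ne
      · exact h
      · exact absurd hab (pNm b a hb ha h).ne'
  have pim : ∀ v, v ∉ V → ∃ j, j ∉ R ∧ p j = v := by
    intro v hv
    obtain ⟨⟨j, hj⟩, hj2⟩ := e.surjective ⟨v, Finset.mem_compl.2 hv⟩
    refine ⟨j, Finset.mem_compl.1 hj, ?_⟩
    rw [pN j (Finset.mem_compl.1 hj), hj2]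
  have key : ∀ i, i ∉ R → p i ≤ f i := by
    intro i hi
    by_contra hlt
    rw [not_le] at hlt
    have hsub : Finset.Iic (f i) ⊆ (Finset.Iio i).image p := by
      intro v hv
      rw [Finset.mem_Iic] at hv
      rw [Finset.mem_image]
      by_cases hvV : v ∈ V
      · obtain ⟨j, hj, rfl⟩ := Finset.mem_image.1 hvV
        refine ⟨j, ?_, pR j hj⟩
        rw [Finset.mem_Iio]
        rcases lt_trichotomy j i with h | h | h
        · exact h
        · exact absurd (h ▸ hj) hi
        · exact absurd ((memR j).1 hj i h) (not_lt.2 hv)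
      · obtain ⟨j, hj, rfl⟩ := pim v hvV
        refine ⟨j, ?_, rfl⟩
        rw [Finset.mem_Iio]
        rcases lt_trichotomy j i with h | h | h
        · exact h
        · subst h; exact absurd hv (not_le.2 hlt)
        · exact absurd (hv.trans_lt hlt) (pNm i j hi hj h).asymm
    have h1 := (Finset.card_le_card hsub).trans Finset.card_image_le
    rw [Fin.card_Iic, Fin.card_Iio] at h1
    have := hle i
    rw [Fin.le_def] at this
    omega
  have key2 : ∀ i, p i ≤ f i := fun i => by
    by_cases hi : i ∈ R
    · exact (pR i hi).le
    · exact key i hi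
  have hrec : ∀ m : ℕ, ∀ i : Fin n, (i : ℕ) = m → ∃ j ≤ i, p j = f i := by
    intro m
    induction m using Nat.strong_induction_on with
    | _ m ih =>
      intro i hi
      by_cases hiR : i ∈ R
      · exact ⟨i, le_rfl, pR i hiR⟩
      · have := hiR
        rw [memR] at this
        push Not at this
        obtain ⟨j, hj, hj2⟩ := this
        obtain ⟨l, hl, hl2⟩ := ih j (by rw [Fin.lt_def] at hj; omega) j rfl
        exact ⟨l, hl.trans hj.le, hl2.trans (le_antisymm (hf hj.le) hj2)⟩
  refine ⟨Equiv.ofBijective p (Finite.injective_iff_bijective.1 pinj), ?_, ?_⟩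
  · intro i j k hij hjk
    simp only [Equiv.ofBijective_apply]
    rintro ⟨h1, h2⟩
    by_cases hj : j ∈ R
    · have a1 := (memR j).1 hj i hij
      have a2 := key2 i
      rw [pR j hj] at h2
      exact absurd (a1.trans h2) (not_lt.2 a2)
    · by_cases hk : k ∈ R
      · have a1 := (memR k).1 hk j hjk
        have a2 := key2 j
        rw [pR k hk] at h1
        exact absurd (a1.trans h1) (not_lt.2 a2)
      · exact absurd h1 (pNm j k hj hk hjk).asymm
  · intro i
    apply le_antisymm
    · obtain ⟨j, hj, h⟩ := rmax_mem (Equiv.ofBijective p (Finite.injective_iff_bijective.1 pinj)) i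
      rw [← h, Equiv.ofBijective_apply]
      exact (key2 j).trans (hf hj)
    · obtain ⟨j, hj, h⟩ := hrec i i rfl
      rw [← h]
      exact rmax_ge (Equiv.ofBijective p (Finite.injective_iff_bijective.1 pinj)) hj

/-- monotone functions above the diagonal, bounded below by `e`, with `k` fixed points -/
def FS (m e k : ℕ) : Set (Fin m → ℕ) :=
  {f | Monotone f ∧ (∀ i : Fin m, (i : ℕ) ≤ f i) ∧ (∀ i, f i < m) ∧ (∀ i, e ≤ f i) ∧
    (Finset.univ.filter (fun i : Fin m => f i = i)).card = k}

theorem FS_finite (m e k : ℕ) : (FS m e k).Finite := by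
  apply Set.Finite.subset (Set.Finite.pi' (fun _ : Fin m => Set.finite_Iio m))
  rintro f ⟨_, _, h, _⟩ i
  exact h i

theorem card_perm (n k : ℕ) :
    Nat.card {π : Equiv.Perm (Fin n) // Avoids321 π ∧ blockNum π = k} = (FS n 0 k).ncard := by
  rw [← Nat.card_coe_set_eq]
  apply Nat.card_eq_of_bijective (fun π => (⟨rmax π.1, rmax_mono _, le_rmax _, rmax_lt _,
    fun _ => Nat.zero_le _, by rw [← blockNum_eq]; exact π.2.2⟩ : FS n 0 k))
  constructor
  · rintro ⟨π, h⟩ ⟨σ, h'⟩ hh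
    have : rmax π = rmax σ := congrArg Subtype.val hh
    exact Subtype.ext (rmax_inj h.1 h'.1 this)
  · rintro ⟨f, h1, h2, h3, h4, h5⟩
    obtain ⟨π, hπ, hr⟩ := rmax_surj (fun i => ⟨f i, h3 i⟩) (fun a b h => h1 h) (fun i => h2 i)
    have hr' : rmax π = f := funext hr
    refine ⟨⟨π, hπ, ?_⟩, Subtype.ext hr'⟩
    rw [blockNum_eq, hr']; exact h5

theorem FS_top (m k e : ℕ) (h : m < e) : (FS (m+1) (e) k).ncard = 0 := by
  rw [Set.ncard_eq_zero (FS_finite _ _ _)]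
  ext f
  simp only [FS, Set.mem_setOf_eq, Set.mem_empty_iff_false, iff_false]
  rintro ⟨_, _, h1, h2, _⟩
  have := h1 0
  have := h2 0
  omega

theorem FS_rec (m e k k' : ℕ) (he : e ≤ m) (hk : k = k' + if e = 0 then 1 else 0) :
    (FS (m+1) e k).ncard = (FS (m+1) (e+1) k).ncard + (FS m (e-1) k').ncard := by
  have hc : ∀ g : Fin m → ℕ, (Finset.univ.filter
      (fun i : Fin (m+1) => (Fin.cons e (fun i => g i + 1) : Fin (m+1) → ℕ) i = i)).card =
      (Finset.univ.filter (fun i : Fin m => g i = i)).card + if e = 0 then 1 else 0 := by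
    intro g
    rw [Fin.card_filter_univ_succ]
    simp
    split_ifs <;> simp
  have hinj : Function.Injective
      (fun g : Fin m → ℕ => (Fin.cons e (fun i => g i + 1) : Fin (m+1) → ℕ)) := by
    intro a b h
    funext i
    have := congrFun h i.succ
    simpa using this
  have hu : FS (m+1) e k = FS (m+1) (e+1) k ∪
      (fun g : Fin m → ℕ => (Fin.cons e (fun i => g i + 1) : Fin (m+1) → ℕ)) '' FS m (e-1) k' := by
    ext f
    constructor
    · rintro ⟨h1, h2, h3, h4, h5⟩
      by_cases h0 : f 0 = e
      · right
        have hfe : (Fin.cons e (fun i => (f (Fin.succ i) - 1) + 1) : Fin (m+1) → ℕ) = f := by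
          funext i
          refine Fin.cases ?_ (fun i => ?_) i
          · simp [h0]
          · have := h2 i.succ
            simp at this ⊢
            omega
        refine ⟨fun i => f i.succ - 1, ⟨?_, ?_, ?_, ?_, ?_⟩, hfe⟩
        · intro a b hab
          have := h1 (Fin.succ_le_succ_iff.2 hab)
          simp; omega
        · intro i
          have := h2 i.succ
          simp at this ⊢; omega
        · intro i
          have := h2 i.succ
          have := h3 i.succ
          simp at *; omega
        · intro i
          have := h4 i.succ
          simp; omega
        · have := hc (fun i => f i.succ - 1)
          rw [hfe, h5, hk] at this
          exact (Nat.add_right_cancel this).symm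
      · left
        refine ⟨h1, h2, h3, ?_, h5⟩
        intro i
        have := h1 (Fin.zero_le i)
        have := h4 0
        omega
    · rintro (⟨h1, h2, h3, h4, h5⟩ | ⟨g, ⟨h1, h2, h3, h4, h5⟩, rfl⟩)
      · exact ⟨h1, h2, h3, fun i => by have := h4 i; omega, h5⟩
      · have hge : ∀ i, e ≤ (Fin.cons e (fun i => g i + 1) : Fin (m+1) → ℕ) i := by
          intro i
          refine Fin.cases ?_ (fun i => ?_) i
          · simp
          · have := h4 i
            simp; omega
        refine ⟨?_, ?_, ?_, hge, ?_⟩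
        · intro a b
          refine Fin.cases ?_ (fun a => ?_) a
          · intro _
            exact hge b
          · refine Fin.cases ?_ (fun b => ?_) b
            · intro h; simp [Fin.le_def] at h
            · intro h
              have := h1 (Fin.succ_le_succ_iff.1 h)
              simpa using this
        · intro i
          refine Fin.cases ?_ (fun i => ?_) i
          · simp
          · simpa using h2 i
        · intro i
          refine Fin.cases ?_ (fun i => ?_) i
          · simp; omega
          · simpa using h3 i
        · rw [hc, h5, hk]
  rw [hu, Set.ncard_union_eq _ (FS_finite _ _ _) ((FS_finite _ _ _).image _),
    Set.ncard_image_of_injective _ hinj]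
  rw [Set.disjoint_left]
  rintro f ⟨_, _, _, h, _⟩ ⟨g, _, rfl⟩
  have := h 0
  simp at this

theorem FS_k0 (m e : ℕ) : (FS (m+1) e 0).ncard = 0 := by
  rw [Set.ncard_eq_zero (FS_finite _ _ _)]
  ext f
  simp only [FS, Set.mem_setOf_eq, Set.mem_empty_iff_false, iff_false]
  rintro ⟨_, h2, h1, _, h3⟩
  rw [Finset.card_eq_zero, Finset.filter_eq_empty_iff] at h3
  have a := h2 (Fin.last m)
  have b := h1 (Fin.last m)
  apply h3 (Finset.mem_univ (Fin.last m))
  simp at a ⊢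
  omega

theorem FS_big (m e k : ℕ) (h : m < k + e) (hk : 1 ≤ k) : (FS m e k).ncard = 0 := by
  rw [Set.ncard_eq_zero (FS_finite _ _ _)]
  ext f
  simp only [FS, Set.mem_setOf_eq, Set.mem_empty_iff_false, iff_false]
  rintro ⟨_, h2, h1, h4, h3⟩
  have : ((Finset.univ.filter (fun i : Fin m => f i = i)).image Fin.val).card ≤
      (Finset.Ico e m).card := by
    apply Finset.card_le_card
    intro x hx
    simp only [Finset.mem_image, Finset.mem_filter, Finset.mem_univ, true_and] at hx
    obtain ⟨i, hi, rfl⟩ := hx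
    have := h4 i
    simp; omega
  rw [Finset.card_image_of_injective _ Fin.val_injective, h3] at this
  simp at this
  omega

theorem FS_zero : (FS 0 0 0).ncard = 1 := by
  rw [Set.ncard_eq_one]
  refine ⟨Fin.elim0, ?_⟩
  ext f
  simp only [FS, Set.mem_setOf_eq, Set.mem_singleton_iff]
  constructor
  · intro _; exact Subsingleton.elim _ _
  · intro _; exact ⟨fun i => i.elim0, fun i => i.elim0, fun i => i.elim0, fun i => i.elim0, by simp⟩

theorem FS_count : ∀ m N e k : ℕ, 1 ≤ k → k + e ≤ m + 1 → N + k + e = 2 * m + 1 →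
    (FS (m+1) e k).ncard + N.choose (m+1) = N.choose m := by
  intro m
  induction m with
  | zero =>
    intro N e k hk h1 h2
    obtain rfl : k = 1 := by omega
    obtain rfl : e = 0 := by omega
    obtain rfl : N = 0 := by omega
    rw [FS_rec 0 0 1 0 (by omega) (by simp), FS_top _ _ _ (by omega), FS_zero]
    simp
  | succ m ih =>
    intro N
    induction N with
    | zero => intro e k hk h1 h2; omega
    | succ N ihN =>
      intro e k hk h1 h2
      have A : (FS (m+1+1) (e+1) k).ncard + N.choose (m+1+1) = N.choose (m+1) := by
        by_cases hb : k + (e+1) ≤ m + 1 + 1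
        · exact ihN (e+1) k hk hb (by omega)
        · rw [FS_big _ _ _ (by omega) hk, Nat.choose_eq_zero_of_lt (by omega),
            Nat.choose_eq_zero_of_lt (by omega)]
      have B : ∀ k', (k = k' + if e = 0 then 1 else 0) →
          (FS (m+1) (e-1) k').ncard + N.choose (m+1) = N.choose m := by
        intro k' hk'
        by_cases he : e = 0
        · subst he
          simp at hk'
          by_cases h0 : k' = 0
          · subst h0
            rw [FS_k0, zero_add]
            obtain rfl : N = m + 1 + m := by omega
            exact Nat.choose_symm_add
          · exact ih N 0 k' (by omega) (by omega) (by omega)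
        · simp [he] at hk'
          subst hk'
          exact ih N (e-1) k hk (by omega) (by omega)
      have C := FS_rec (m+1) e k (k - if e = 0 then 1 else 0) (by omega) (by split_ifs <;> omega)
      have D := B (k - if e = 0 then 1 else 0) (by split_ifs <;> omega)
      rw [C, Nat.choose_succ_succ N (m+1), Nat.choose_succ_succ N m]
      simp only [Nat.succ_eq_add_one]
      omega

/-- The number of 321-avoiding permutations in `S_n` with exactly `k` blocks is the
ballot number `C_{n,k}`. -/
theorem card_avoids321_blockNum (n k : ℕ) (h1 : 1 ≤ k) (h2 : k ≤ n) :
    Nat.card {π : Equiv.Perm (Fin n) // Avoids321 π ∧ blockNum π = k} =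
      Nat.choose (2 * n - k - 1) (n - 1) - Nat.choose (2 * n - k - 1) n := by
  rw [card_perm]
  obtain ⟨m, rfl⟩ : ∃ m, n = m + 1 := ⟨n - 1, by omega⟩
  have := FS_count m (2 * (m+1) - k - 1) 0 k h1 (by omega) (by omega)
  simp only [Nat.add_sub_cancel]
  omega
end

section
/- For every 1 ≤ k ≤ n and every D ⊆ [n−1], the number of 321-avoiding permutations π ∈ S_n with bl(π) = k and Des(π) = D equals the number of standard Young tableaux T of shape (n−1, n−k) with Des(T) ∩ [n−1] = D. -/
/-- A standard Young tableau with two rows of lengths `a` and `b` (where `b ≤ a`),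
with entries `1, …, a + b`, increasing along rows and down columns. -/
structure TwoRowSYT (a b : ℕ) where
  row1 : Fin a → ℕ
  row2 : Fin b → ℕ
  mono1 : StrictMono row1
  mono2 : StrictMono row2
  col_lt : ∀ j : Fin b, ∀ h : (j : ℕ) < a, row1 ⟨j, h⟩ < row2 j
  mem1 : ∀ i, row1 i ∈ Finset.Icc 1 (a + b)
  mem2 : ∀ i, row2 i ∈ Finset.Icc 1 (a + b)
  surj : ∀ x ∈ Finset.Icc 1 (a + b), (∃ i, row1 i = x) ∨ (∃ i, row2 i = x)

/-- The descent set of a two-row standard Young tableau: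
entries `i` such that `i + 1` lies in a lower row than `i`. -/
def DesSYT {a b : ℕ} (T : TwoRowSYT a b) : Finset ℕ :=
  (Finset.Icc 1 (a + b)).filter
    (fun i => (∃ p, T.row1 p = i) ∧ (∃ q, T.row2 q = i + 1))


namespace BLD

section alg
variable {R : Type*} [Ring R]

/-- sums of words starting with U resp. D with given descent flags -/
def XP (U D : R) : ℕ → (ℕ → Bool) → R × R
  | 0, _ => (U, D)
  | n+1, f => if f 0 then (U * (XP U D n (fun i => f (i+1))).2, 0)
      else (U * (XP U D n (fun i => f (i+1))).1,
        D * ((XP U D n (fun i => f (i+1))).1 + (XP U D n (fun i => f (i+1))).2))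

def XS (U D : R) (n : ℕ) (f : ℕ → Bool) : R := (XP U D n f).1 + (XP U D n f).2

theorem UXD_zero (U D : R) (f) : U * (XP U D 0 f).2 = U * D := rfl
theorem UXD_succ (U D : R) (n f) : U * (XP U D (n+1) f).2 =
    if f 0 then 0 else (U * D) * XS U D n (fun i => f (i+1)) := by
  simp only [XP, XS]; split_ifs <;> simp [mul_assoc]
theorem XS_zero (U D : R) (f) : XS U D 0 f = U + D := rfl
theorem XS_succ (U D : R) (n f) : XS U D (n+1) f =
    if f 0 then U * (XP U D n (fun i => f (i+1))).2 else
     (U + D) * XS U D n (fun i => f (i+1)) - U * (XP U D n (fun i => f (i+1))).2 := by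
  simp only [XP, XS]; split_ifs
  · simp
  · simp only []; noncomm_ring

theorem alg_main {R₁ R₂ : Type*} [Ring R₁] [Ring R₂] (U₁ D₁ : R₁) (U₂ D₂ : R₂)
    (h1 : U₁ * D₁ = U₁ + D₁) (h2 : U₂ * D₂ = 1) (φ₁ : R₁ →+ ℤ) (φ₂ : R₂ →+ ℤ) (s : ℕ)
    (base : ∀ m t, t + s + 1 = 2 * m → φ₁ ((U₁ + D₁)^m) = φ₂ ((U₂ + D₂)^t)) (n : ℕ) :
    (∀ f r r', r' + s = 2 * r + n → φ₁ ((U₁ + D₁)^r * XS U₁ D₁ n f) = φ₂ ((U₂ + D₂)^r' * XS U₂ D₂ n f)) ∧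
    (∀ f r r', r' + s = 2 * r + n + 1 → φ₁ ((U₁ + D₁)^r * (U₁ * (XP U₁ D₁ n f).2))
       = φ₂ ((U₂ + D₂)^r' * (U₂ * (XP U₂ D₂ n f).2))) := by
  induction n with
  | zero =>
    constructor
    · intro f r r' h
      rw [XS_zero, XS_zero, ← pow_succ, ← pow_succ]; apply base; omega
    · intro f r r' h
      rw [UXD_zero, UXD_zero, h1, h2, ← pow_succ, mul_one]; apply base; omega
  | succ n ih =>
    constructor
    · intro f r r' h
      rw [XS_succ, XS_succ]
      split_ifs
      · apply ih.2; omega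
      · rw [mul_sub, mul_sub, map_sub, map_sub, ih.2 _ r r' (by omega), ← mul_assoc _ (U₁ + D₁),
          ← mul_assoc _ (U₂ + D₂), ← pow_succ, ← pow_succ, ih.1 _ (r+1) (r'+1) (by omega)]
    · intro f r r' h
      rw [UXD_succ, UXD_succ, h1, h2]
      split_ifs
      · simp
      · rw [← mul_assoc, ← pow_succ, one_mul]
        apply ih.1; omega
end alg

section gen
variable {M : Type*} [AddCommGroup M]

def opU (w : ℕ → M →ₗ[ℤ] M) : Module.End ℤ (ℕ → M) where
  toFun G := fun h => w h (G (h+1))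
  map_add' := by intro a b; ext h; simp
  map_smul' := by intro a b; ext h; simp

def opD (stp : ℕ → Finset ℕ) (w : ℕ → M →ₗ[ℤ] M) : Module.End ℤ (ℕ → M) where
  toFun G := fun h => w h (∑ j ∈ (stp h).erase (h+1), G j)
  map_add' := by intro a b; ext h; simp [Finset.sum_add_distrib]
  map_smul' := by intro a b; ext h; simp [Finset.smul_sum]

def cns (h : ℕ) (c : ℕ → ℕ) : ℕ → ℕ
  | 0 => h
  | i+1 => c i

open Classical in
noncomputable def PP (stp : ℕ → Finset ℕ) : ℕ → ℕ → Finset (ℕ → ℕ)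
  | 0, h => {cns h (fun _ => 0)}
  | n+1, h => (stp h).biUnion (fun j => (PP stp n j).image (cns h))

theorem cns_eta (c : ℕ → ℕ) : cns (c 0) (fun i => c (i+1)) = c := by
  ext i; cases i <;> rfl

theorem cns_inj (h : ℕ) : Function.Injective (cns h) := by
  intro a b hab; ext i; exact congrFun hab (i+1)

theorem mem_PP (stp : ℕ → Finset ℕ) (n h : ℕ) (c : ℕ → ℕ) : c ∈ PP stp n h ↔
    c 0 = h ∧ (∀ i < n, c (i+1) ∈ stp (c i)) ∧ ∀ i, n < i → c i = 0 := by
  induction n generalizing h c with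
  | zero =>
    simp only [PP, Finset.mem_singleton]
    constructor
    · rintro rfl
      refine ⟨rfl, by simp, ?_⟩
      intro i hi; cases i with
      | zero => omega
      | succ i => rfl
    · rintro ⟨h0, -, h1⟩
      ext i; cases i with
      | zero => exact h0
      | succ i => exact h1 _ (by omega)
  | succ n ih =>
    simp only [PP, Finset.mem_biUnion, Finset.mem_image]
    constructor
    · rintro ⟨j, hj, a, ha, rfl⟩
      rw [ih] at ha
      obtain ⟨h0, h1, h2⟩ := ha
      refine ⟨rfl, ?_, ?_⟩
      · intro i hi
        cases i with
        | zero => simpa [cns, h0] using hj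
        | succ i => exact h1 i (by omega)
      · intro i hi
        cases i with
        | zero => omega
        | succ i => exact h2 i (by omega)
    · rintro ⟨rfl, h1, h2⟩
      refine ⟨c 1, h1 0 (by omega), fun i => c (i+1), ?_, cns_eta c⟩
      rw [ih]
      exact ⟨rfl, fun i hi => h1 (i+1) (by omega), fun i hi => h2 (i+1) (by omega)⟩

theorem sum_PP (stp : ℕ → Finset ℕ) (n h : ℕ) (F : (ℕ → ℕ) → M) :
    ∑ c ∈ PP stp (n+1) h, F c = ∑ j ∈ stp h, ∑ c ∈ PP stp n j, F (cns h c) := by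
  classical
  simp only [PP]
  rw [Finset.sum_biUnion]
  · apply Finset.sum_congr rfl
    intro j _
    rw [Finset.sum_image]
    intro a _ b _ hab; exact cns_inj h hab
  · intro i _ j _ hij
    rw [Function.onFun, Finset.disjoint_left]
    intro a ha hb
    simp only [Finset.mem_image] at ha hb
    obtain ⟨a1, h1, rfl⟩ := ha
    obtain ⟨b1, h2, h3⟩ := hb
    have := cns_inj h h3; subst this
    rw [mem_PP] at h1 h2
    exact hij (h1.1.symm.trans h2.1)

def val (w : ℕ → M →ₗ[ℤ] M) (g : ℕ → M) : ℕ → (ℕ → ℕ) → M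
  | 0, c => g (c 0)
  | n+1, c => w (c 0) (val w g n (fun i => c (i+1)))

theorem val_cns (w : ℕ → M →ₗ[ℤ] M) (g : ℕ → M) (n h c) :
  val w g (n+1) (cns h c) = w h (val w g n c) := rfl

def Flags (n : ℕ) (f : ℕ → Bool) (c : ℕ → ℕ) : Prop :=
  ∀ i, i + 1 < n → (f i = true ↔ (c (i+1) = c i + 1 ∧ c (i+2) ≠ c (i+1) + 1))

theorem opsum_apply (stp : ℕ → Finset ℕ) (hs : ∀ h, h + 1 ∈ stp h) (w : ℕ → M →ₗ[ℤ] M) (G : ℕ → M) (h : ℕ) :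
    (opU w + opD stp w) G h = w h (∑ j ∈ stp h, G j) := by
  rw [← Finset.add_sum_erase _ _ (hs h), map_add]; rfl

theorem pow_val (stp : ℕ → Finset ℕ) (hs : ∀ h, h + 1 ∈ stp h) (w : ℕ → M →ₗ[ℤ] M) (g : ℕ → M) (s h : ℕ) :
    ((opU w + opD stp w)^s) g h = ∑ c ∈ PP stp s h, val w g s c := by
  induction s generalizing h with
  | zero => simp [PP, val, cns]
  | succ s ih =>
    rw [pow_succ', Module.End.mul_apply, opsum_apply stp hs, sum_PP, map_sum]
    apply Finset.sum_congr rfl; intro j _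
    rw [ih, map_sum]; rfl

theorem Flags_cns (n f h c) : Flags (n+2) f (cns h c) ↔
    ((f 0 = true ↔ (c 0 = h + 1 ∧ c 1 ≠ c 0 + 1)) ∧ Flags (n+1) (fun i => f (i+1)) c) := by
  constructor
  · intro H
    exact ⟨H 0 (by omega), fun i hi => H (i+1) (by omega)⟩
  · rintro ⟨h0, h1⟩ i hi
    cases i with
    | zero => exact h0
    | succ i => exact h1 i (by omega)

open Classical in
theorem XP_val (stp : ℕ → Finset ℕ) (hs : ∀ h, h + 1 ∈ stp h) (w : ℕ → M →ₗ[ℤ] M) (g : ℕ → M) (s n : ℕ) :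
    ∀ (f : ℕ → Bool) (h : ℕ),
    ((XP (opU w) (opD stp w) n f).1 (((opU w + opD stp w)^s) g) h =
      ∑ c ∈ PP stp (s+n+1) h, if c 1 = h + 1 ∧ Flags (n+1) f c then val w g (s+n+1) c else 0) ∧
    ((XP (opU w) (opD stp w) n f).2 (((opU w + opD stp w)^s) g) h =
      ∑ c ∈ PP stp (s+n+1) h, if c 1 ≠ h + 1 ∧ Flags (n+1) f c then val w g (s+n+1) c else 0) := by
  induction n with
  | zero =>
    intro f h
    have hF : ∀ c, Flags 1 f c := fun c i hi => by omega
    simp only [XP, Nat.add_zero, Nat.zero_add, hF, and_true, sum_PP]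
    have key : ∀ j, ∀ c ∈ PP stp s j, cns h c 1 = j := fun j c hc => ((mem_PP _ _ _ _).1 hc).1
    constructor
    · rw [← Finset.add_sum_erase _ _ (hs h), Finset.sum_eq_zero (s := (stp h).erase (h+1)), add_zero]
      · change w h _ = _
        rw [pow_val stp hs, map_sum]
        apply Finset.sum_congr rfl; intro c hc
        rw [if_pos (key _ c hc), val_cns]
      · intro j hj
        apply Finset.sum_eq_zero; intro c hc
        rw [if_neg]; rw [key j c hc]; exact (Finset.mem_erase.1 hj).1
    · rw [← Finset.add_sum_erase _ _ (hs h), Finset.sum_eq_zero (s := PP stp s (h+1)), zero_add]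
      · change w h _ = _
        rw [map_sum]
        apply Finset.sum_congr rfl; intro j hj
        rw [pow_val stp hs, map_sum]
        apply Finset.sum_congr rfl; intro c hc
        rw [if_pos (by rw [key _ c hc]; exact (Finset.mem_erase.1 hj).1), val_cns]
      · intro c hc
        rw [if_neg]; rw [key _ c hc]; simp
  | succ n ih =>
    intro f h
    have key : ∀ j, ∀ c ∈ PP stp (s+n+1) j, c 0 = j := fun j c hc => ((mem_PP _ _ _ _).1 hc).1
    rw [show s + (n+1) + 1 = (s+n+1)+1 by omega]
    rw [sum_PP, sum_PP]
    simp only [val_cns, Flags_cns]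
    constructor
    · rw [← Finset.add_sum_erase _ _ (hs h), Finset.sum_eq_zero (s := (stp h).erase (h+1)), add_zero]
      · simp only [XP]
        split_ifs with hf
        · change w h _ = _
          rw [(ih _ _).2, map_sum]
          apply Finset.sum_congr rfl; intro c hc
          by_cases hF : Flags (n+1) (fun i => f (i+1)) c <;> by_cases h3 : c 1 = h + 1 + 1 <;>
            simp [key _ c hc, cns, hf, hF, h3]
        · change w h _ = _
          rw [(ih _ _).1, map_sum]
          apply Finset.sum_congr rfl; intro c hc
          by_cases hF : Flags (n+1) (fun i => f (i+1)) c <;> by_cases h3 : c 1 = h + 1 + 1 <;>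
            simp [key _ c hc, cns, hf, hF, h3]
      · intro j hj
        apply Finset.sum_eq_zero; intro c hc
        rw [if_neg]
        rintro ⟨h1, -⟩
        exact (Finset.mem_erase.1 hj).1 ((key j c hc).symm.trans h1)
    · rw [← Finset.add_sum_erase _ _ (hs h), Finset.sum_eq_zero (s := PP stp (s+n+1) (h+1)), zero_add]
      · simp only [XP]
        split_ifs with hf
        · simp only [LinearMap.zero_apply, Pi.zero_apply]
          symm
          apply Finset.sum_eq_zero; intro j hj
          apply Finset.sum_eq_zero; intro c hc
          rw [if_neg]
          rintro ⟨h1, h2, -⟩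
          exact h1 (h2.1 hf).1
        · change w h (∑ j ∈ (stp h).erase (h+1), _) = _
          rw [map_sum]
          apply Finset.sum_congr rfl; intro j hj
          rw [LinearMap.add_apply, Pi.add_apply, (ih _ _).1, (ih _ _).2, ← Finset.sum_add_distrib, map_sum]
          apply Finset.sum_congr rfl; intro c hc
          have := (Finset.mem_erase.1 hj).1
          by_cases hF : Flags (n+1) (fun i => f (i+1)) c <;> by_cases h3 : c 1 = j + 1 <;>
            simp [key _ c hc, cns, hf, this, h3, hF]
      · intro c hc
        rw [if_neg]; rintro ⟨h1, -⟩; exact h1 (key _ c hc)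

open Classical in
theorem XS_val (stp : ℕ → Finset ℕ) (hs : ∀ h, h + 1 ∈ stp h) (w : ℕ → M →ₗ[ℤ] M) (g : ℕ → M) (s n : ℕ)
    (f : ℕ → Bool) (h : ℕ) :
    (XS (opU w) (opD stp w) n f) (((opU w + opD stp w)^s) g) h =
      ∑ c ∈ PP stp (s+n+1) h, if Flags (n+1) f c then val w g (s+n+1) c else 0 := by
  rw [XS, LinearMap.add_apply, Pi.add_apply, (XP_val stp hs w g s n f h).1, (XP_val stp hs w g s n f h).2,
    ← Finset.sum_add_distrib]
  apply Finset.sum_congr rfl; intro c hc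
  by_cases h3 : c 1 = h + 1 <;> simp [h3]
end gen


section spec

def wL (h : ℕ) : (ℕ → ℤ) →ₗ[ℤ] (ℕ → ℤ) where
  toFun φ := fun k => if h = 0 then (if k = 0 then 0 else φ (k-1)) else φ k
  map_add' := by intro a b; ext k; simp only [Pi.add_apply]; split_ifs <;> simp
  map_smul' := by intro a b; ext k; simp

theorem wL_apply (h φ k) : wL h φ k = if h = 0 then (if k = 0 then 0 else φ (k-1)) else φ k := rfl

def wT (_ : ℕ) : ℤ →ₗ[ℤ] ℤ := LinearMap.id
def stpL (h : ℕ) : Finset ℕ := Finset.range (h+2)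
def stpT (h : ℕ) : Finset ℕ := if h = 0 then {1} else {h-1, h+1}
def gL (h k : ℕ) : ℤ := if h = 0 ∧ k = 0 then 1 else 0
def gT (e h : ℕ) : ℤ := if h = e then 1 else 0

theorem hsL (h) : h + 1 ∈ stpL h := by simp [stpL]
theorem hsT (h) : h + 1 ∈ stpT h := by simp only [stpT]; split_ifs <;> simp_all

theorem UD_L : opU wL * opD stpL wL = opU wL + opD stpL wL := by
  apply LinearMap.ext; intro G
  funext h
  rw [opsum_apply stpL hsL]
  change wL h (wL (h+1) (∑ j ∈ (stpL (h+1)).erase (h+1+1), G j)) = _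
  have : (stpL (h+1)).erase (h+1+1) = stpL h := by
    ext x; simp [stpL]; omega
  rw [this]
  congr 1

theorem UD_T : opU wT * opD stpT wT = 1 := by
  apply LinearMap.ext; intro G
  funext h
  change (∑ j ∈ (stpT (h+1)).erase (h+1+1), G j) = G h
  have : (stpT (h+1)).erase (h+1+1) = {h} := by
    ext x; simp [stpT]; omega
  rw [this]; simp

abbrev LL := opU wL + opD stpL wL
abbrev HH := opU wT + opD stpT wT

def aa (m h k : ℕ) : ℤ := (LL ^ m) gL h k
def at' (m h k : ℕ) : ℤ := if h = 0 then aa m 0 (k+1) else aa m h k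
def gam (N e : ℕ) : ℤ := (HH ^ N) (gT e) 0

theorem aa_zero (h k) : aa 0 h k = if h = 0 ∧ k = 0 then 1 else 0 := rfl
theorem aa_succ (m h k) : aa (m+1) h k =
    if h = 0 then (if k = 0 then 0 else ∑ j ∈ Finset.range (h+2), aa m j (k-1))
      else ∑ j ∈ Finset.range (h+2), aa m j k := by
  simp only [aa]
  rw [pow_succ', Module.End.mul_apply, opsum_apply stpL hsL, wL_apply]
  simp [stpL, Finset.sum_apply]

theorem at_rec0 (m k) : at' (m+1) 0 k = aa m 0 k + at' m 1 k := by
  simp [at', aa_succ, Finset.sum_range_succ]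
theorem at_rec0' (m) : at' (m+2) 0 0 = at' (m+1) 1 0 := by
  rw [at_rec0, aa_succ]; simp
theorem at_rec0'' (m k) : at' (m+1) 0 (k+1) = at' m 0 k + at' m 1 (k+1) := by
  rw [at_rec0]; simp [at']
theorem at_recS (m h k) : at' (m+1) (h+1) k = at' (m+1) h k + at' m (h+2) k := by
  cases h with
  | zero => simp [at', aa_succ, Finset.sum_range_succ]
  | succ h =>
    simp only [at', aa_succ, Nat.add_eq_zero_iff, if_false, one_ne_zero, and_false, OfNat.ofNat_ne_zero]
    rw [show h + 1 + 1 + 2 = (h + 1 + 2) + 1 from rfl, Finset.sum_range_succ _ (h+1+2)]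

theorem gam_zero (e) : gam 0 e = if e = 0 then 1 else 0 := by
  simp [gam, gT, eq_comm]
theorem HgT0 : HH (gT 0) = gT 1 := by
  funext h
  rw [opsum_apply stpT hsT]
  change ∑ j ∈ stpT h, gT 0 j = _
  simp only [gT, stpT]
  split_ifs with h1 h2 h2
  · omega
  · simp
  · simp [h2]
  · rw [Finset.sum_pair (by omega)]; simp; omega
theorem HgTS (e) : HH (gT (e+1)) = gT e + gT (e+2) := by
  funext h
  rw [opsum_apply stpT hsT]
  change ∑ j ∈ stpT h, gT (e+1) j = _
  simp only [gT, stpT, Pi.add_apply]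
  split_ifs with h1 h2 h2
  all_goals first
    | (rw [Finset.sum_pair (by omega)]; split_ifs <;> omega)
    | (rw [Finset.sum_singleton]; split_ifs <;> omega)
theorem gam_rec0 (N) : gam (N+1) 0 = gam N 1 := by
  simp only [gam]; rw [pow_succ, Module.End.mul_apply, HgT0]
theorem gam_recS (N e) : gam (N+1) (e+1) = gam N e + gam N (e+2) := by
  simp only [gam]; rw [pow_succ, Module.End.mul_apply, HgTS, map_add]; rfl

theorem at_one (h k) : at' 1 h k = if k = 0 then 1 else 0 := by
  simp only [at', aa_succ]
  split_ifs <;> simp_all [aa_zero]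

theorem gam_vanish (N e) (h : N < e) : gam N e = 0 := by
  induction N generalizing e with
  | zero => rw [gam_zero, if_neg (by omega)]
  | succ N ih =>
    obtain ⟨e, rfl⟩ : ∃ e', e = e' + 1 := ⟨e-1, by omega⟩
    rw [gam_recS, ih _ (by omega), ih _ (by omega), add_zero]

theorem gam_diag (N) : gam N N = 1 := by
  induction N with
  | zero => rw [gam_zero, if_pos rfl]
  | succ N ih => rw [gam_recS, ih, gam_vanish _ _ (by omega), add_zero]

theorem at_vanish (m h k) (hk : m < k + 1) : at' (m+1) h (k+1) = 0 := by
  induction m generalizing h k with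
  | zero => rw [at_one, if_neg (by omega)]
  | succ m ih =>
    have hv : ∀ h, at' (m+1) h (k+1) = 0 := fun h => ih h k (by omega)
    obtain ⟨k, rfl⟩ : ∃ e', k = e' + 1 := ⟨k-1, by omega⟩
    induction h with
    | zero => rw [at_rec0'', hv, ih 0 k (by omega), add_zero]
    | succ h ih2 => rw [at_recS, ih2, hv, add_zero]

theorem at_eq (m h k N) (hN : N + k = 2 * m + h) : at' (m+1) h k = gam N (k+h) := by
  induction m generalizing h k N with
  | zero =>
    rw [at_one]
    split_ifs with h0
    · subst h0
      obtain rfl : N = h := by omega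
      rw [Nat.zero_add, gam_diag]
    · rw [gam_vanish]; omega
  | succ m ih =>
    induction h generalizing N with
    | zero =>
      cases k with
      | zero =>
        obtain ⟨N, rfl⟩ : ∃ e', N = e' + 1 := ⟨N-1, by omega⟩
        rw [at_rec0', gam_rec0]; exact ih 1 0 N (by omega)
      | succ k =>
        cases N with
        | zero => rw [at_vanish _ _ _ (by omega), gam_vanish _ _ (by omega)]
        | succ N =>
          rw [at_rec0'', Nat.add_zero, gam_recS, ih 0 k N (by omega), ih 1 (k+1) N (by omega)]
          rfl
    | succ h ih2 =>
      cases N with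
      | zero =>
        obtain ⟨k, rfl⟩ : ∃ e', k = e' + 1 := ⟨k-1, by omega⟩
        rw [at_vanish _ _ _ (by omega), gam_vanish _ _ (by omega)]
      | succ N =>
        rw [at_recS, ih2 N (by omega), ih (h+2) k N (by omega)]
        exact (gam_recS N (k+h)).symm

theorem val_T (e m c) : val wT (gT e) m c = if c m = e then 1 else 0 := by
  induction m generalizing c with
  | zero => rfl
  | succ m ih => simp only [val, wT, LinearMap.id_apply, ih]

theorem val_L (m c k) : val wL gL m c k =
    if c m = 0 ∧ ((Finset.range m).filter (fun i => c i = 0)).card = k then 1 else 0 := by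
  induction m generalizing c k with
  | zero => simp [val, gL, eq_comm]
  | succ m ih =>
    have : ((Finset.range (m+1)).filter (fun i => c i = 0)).card =
      (if c 0 = 0 then 1 else 0) + ((Finset.range m).filter (fun i => c (i+1) = 0)).card := by
      rw [Finset.card_filter, Finset.sum_range_succ', Finset.card_filter, add_comm]
    simp only [val, wL_apply, ih, this]
    by_cases h0 : c 0 = 0
    · cases k with
      | zero => simp [h0]
      | succ k => simp [h0]; congr 1; simp; intro _; omega
    · simp [h0]

open Classical in
theorem main_count (n k s : ℕ) (hn : 1 ≤ n) (hk : 1 ≤ k) (hs : s + 1 + k = n) (f : ℕ → Bool) :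
    ((PP stpL n 0).filter (fun c => Flags n f c ∧ c n = 0 ∧
      ((Finset.range n).filter (fun i => c i = 0)).card = k)).card =
    ((PP stpT (s + n) 0).filter (fun c => Flags n f c ∧ c (s+n) = k - 1)).card := by
  obtain ⟨n, rfl⟩ : ∃ e', n = e' + 1 := ⟨n-1, by omega⟩
  obtain ⟨k, rfl⟩ : ∃ e', k = e' + 1 := ⟨k-1, by omega⟩
  let φ₁ : Module.End ℤ (ℕ → ℕ → ℤ) →+ ℤ := 
    { toFun := fun x => x gL 0 (k+1), map_zero' := rfl, map_add' := fun _ _ => rfl }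
  let φ₂ : Module.End ℤ (ℕ → ℤ) →+ ℤ := 
    { toFun := fun x => x ((HH ^ s) (gT k)) 0, map_zero' := rfl, map_add' := fun _ _ => rfl }
  have key := (alg_main (opU wL) (opD stpL wL) (opU wT) (opD stpT wT) UD_L UD_T φ₁ φ₂ (s + (k+1)) ?_ n).1 
    f 0 0 (by omega)
  · rw [pow_zero, pow_zero, one_mul, one_mul] at key
    change (XS (opU wL) (opD stpL wL) n f) (((opU wL + opD stpL wL)^0) gL) 0 (k+1) =
      (XS (opU wT) (opD stpT wT) n f) (((opU wT + opD stpT wT)^s) (gT k)) 0 at key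
    rw [XS_val stpL hsL, XS_val stpT hsT, Finset.sum_apply] at key
    have e1 : ∀ c : ℕ → ℕ, (if Flags (n+1) f c then val wL gL (0+n+1) c else 0) (k+1) =
      if (Flags (n+1) f c ∧ c (n+1) = 0 ∧
      ((Finset.range (n+1)).filter (fun i => c i = 0)).card = k+1) then (1:ℤ) else 0 := by
      intro c
      rw [Nat.zero_add]
      by_cases hF : Flags (n+1) f c
      · simp only [hF, if_true, true_and, val_L]
      · simp [hF]
    have e2 : ∀ c : ℕ → ℕ, (if Flags (n+1) f c then val wT (gT k) (s+n+1) c else 0) =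
      if (Flags (n+1) f c ∧ c (s+(n+1)) = k+1-1) then (1:ℤ) else 0 := by
      intro c
      by_cases hF : Flags (n+1) f c
      · simp only [hF, if_true, true_and, val_T]; rfl
      · simp [hF]
    rw [Finset.sum_congr rfl (fun c _ => e1 c), Finset.sum_congr rfl (fun c _ => e2 c)] at key
    rw [Finset.sum_boole, Finset.sum_boole, Nat.zero_add] at key
    exact_mod_cast key
  · intro m t h
    obtain ⟨m, rfl⟩ : ∃ e', m = e' + 1 := ⟨m-1, by omega⟩
    have h1 := at_eq m 0 k (t+s) (by omega)
    simp only [at', if_true, Nat.add_zero, gam] at h1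
    rw [pow_add] at h1
    exact h1
end spec


section tab

theorem PT_ext {N : ℕ} {c c' : ℕ → ℕ} (hc : c ∈ PP stpT N 0) (hc' : c' ∈ PP stpT N 0)
    (h : ∀ i < N, (c (i+1) = c i + 1 ↔ c' (i+1) = c' i + 1)) : c = c' := by
  rw [mem_PP] at hc hc'
  have key : ∀ i, i ≤ N → c i = c' i := by
    intro i
    induction i with
    | zero => intro _; rw [hc.1, hc'.1]
    | succ i ih =>
      intro hi
      have h1 := hc.2.1 i (by omega)
      have h2 := hc'.2.1 i (by omega)
      have h3 := h i (by omega)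
      have h4 := ih (by omega)
      rw [← h4] at h2 h3
      simp only [stpT] at h1 h2
      split_ifs at h1 h2 <;> simp at h1 h2 <;> omega
  ext i
  by_cases hi : i ≤ N
  · exact key i hi
  · rw [hc.2.2 i (by omega), hc'.2.2 i (by omega)]

variable {a b : ℕ}

def R1 (T : TwoRowSYT a b) : Finset ℕ := Finset.univ.image T.row1
def R2 (T : TwoRowSYT a b) : Finset ℕ := Finset.univ.image T.row2

theorem R_union (T : TwoRowSYT a b) : R1 T ∪ R2 T = Finset.Icc 1 (a+b) := by
  ext x
  simp only [R1, R2, Finset.mem_union, Finset.mem_image, Finset.mem_univ, true_and]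
  constructor
  · rintro (⟨i, rfl⟩ | ⟨i, rfl⟩)
    · exact T.mem1 i
    · exact T.mem2 i
  · exact T.surj x

theorem card_R1 (T : TwoRowSYT a b) : (R1 T).card = a := by
  rw [R1, Finset.card_image_of_injective _ T.mono1.injective]; simp
theorem card_R2 (T : TwoRowSYT a b) : (R2 T).card = b := by
  rw [R2, Finset.card_image_of_injective _ T.mono2.injective]; simp

theorem R_disj (T : TwoRowSYT a b) : Disjoint (R1 T) (R2 T) := by
  have h := Finset.card_union_add_card_inter (R1 T) (R2 T)
  rw [R_union, card_R1, card_R2] at h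
  simp at h
  exact Finset.disjoint_iff_inter_eq_empty.2 h

theorem mem_R2_iff (T : TwoRowSYT a b) {x : ℕ} (h1 : 1 ≤ x) (h2 : x ≤ a + b) : x ∈ R2 T ↔ x ∉ R1 T := by
  have h : x ∈ R1 T ∪ R2 T := by rw [R_union]; simp; omega
  constructor
  · intro h3 h4; exact Finset.disjoint_left.1 (R_disj T) h4 h3
  · intro h3; exact (Finset.mem_union.1 h).resolve_left h3

def cnt (S : Finset ℕ) (i : ℕ) : ℕ := (S.filter (fun x => x ≤ i)).card

theorem cnt_succ (S : Finset ℕ) (i : ℕ) : cnt S (i+1) = cnt S i + if i + 1 ∈ S then 1 else 0 := by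
  simp only [cnt]
  split_ifs with h
  · rw [← Finset.card_insert_of_notMem (a := i+1) (s := S.filter (fun x => x ≤ i)) (by simp)]
    congr 1; ext x
    simp only [Finset.mem_filter, Finset.mem_insert]
    constructor
    · rintro ⟨h1, h2⟩
      by_cases hx : x = i + 1
      · left; exact hx
      · right; exact ⟨h1, by omega⟩
    · rintro (rfl | ⟨h1, h2⟩)
      · exact ⟨h, le_rfl⟩
      · exact ⟨h1, by omega⟩
  · rw [add_zero]; congr 1; ext x
    simp only [Finset.mem_filter]
    constructor
    · rintro ⟨h1, h2⟩
      refine ⟨h1, ?_⟩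
      have : x ≠ i + 1 := by rintro rfl; exact h h1
      omega
    · rintro ⟨h1, h2⟩; exact ⟨h1, by omega⟩

theorem cnt_zero {S : Finset ℕ} {N : ℕ} (h : S ⊆ Finset.Icc 1 N) : cnt S 0 = 0 := by
  rw [cnt, Finset.card_eq_zero, Finset.filter_eq_empty_iff]
  intro x hx; have := Finset.mem_Icc.1 (h hx); omega

theorem cnt_top {S : Finset ℕ} {N : ℕ} (h : S ⊆ Finset.Icc 1 N) : cnt S N = S.card := by
  rw [cnt, Finset.filter_true_of_mem]
  intro x hx; have := Finset.mem_Icc.1 (h hx); omega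

theorem R1_sub (T : TwoRowSYT a b) : R1 T ⊆ Finset.Icc 1 (a+b) := by
  rw [← R_union T]; exact Finset.subset_union_left
theorem R2_sub (T : TwoRowSYT a b) : R2 T ⊆ Finset.Icc 1 (a+b) := by
  rw [← R_union T]; exact Finset.subset_union_right

theorem cnt_image {m : ℕ} {r : Fin m → ℕ} (hr : StrictMono r) (i : ℕ) :
    cnt (Finset.univ.image r) i = (Finset.univ.filter (fun p => r p ≤ i)).card := by
  rw [cnt, Finset.filter_image, Finset.card_image_of_injective _ hr.injective]

theorem cnt_le (hab : b ≤ a) (T : TwoRowSYT a b) (i : ℕ) : cnt (R2 T) i ≤ cnt (R1 T) i := by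
  rw [R1, R2, cnt_image T.mono1, cnt_image T.mono2]
  apply Finset.card_le_card_of_injOn (Fin.castLE hab)
  · intro q hq
    simp only [Finset.coe_filter, Finset.mem_univ, true_and, Set.mem_ofPred_eq] at hq ⊢
    have := T.col_lt q (by omega)
    exact le_trans (le_of_lt this) hq
  · intro x _ y _ hxy; exact Fin.castLE_injective hab hxy

def cT (T : TwoRowSYT a b) (i : ℕ) : ℕ := if i ≤ a + b then cnt (R1 T) i - cnt (R2 T) i else 0

theorem cT_step (hab : b ≤ a) (T : TwoRowSYT a b) (i : ℕ) (hi : i < a + b) :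
    (i + 1 ∈ R1 T ∧ cT T (i+1) = cT T i + 1) ∨ (i + 1 ∉ R1 T ∧ cT T (i+1) + 1 = cT T i) := by
  have h1 := cnt_le hab T i
  have h2 := cnt_le hab T (i+1)
  have h3 := mem_R2_iff T (x := i+1) (by omega) (by omega)
  simp only [cT, if_pos (show i ≤ a + b by omega), if_pos (show i + 1 ≤ a + b by omega)]
  rw [cnt_succ, cnt_succ] at *
  by_cases h : i + 1 ∈ R1 T
  · simp [h, h3] at *; omega
  · simp [h, h3] at *; omega

theorem cT_up (hab : b ≤ a) (T : TwoRowSYT a b) (i : ℕ) (hi : i < a + b) :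
    cT T (i+1) = cT T i + 1 ↔ i + 1 ∈ R1 T := by
  rcases cT_step hab T i hi with ⟨h1, h2⟩ | ⟨h1, h2⟩
  · simp [h1, h2]
  · simp [h1]; omega

theorem cT_mem (hab : b ≤ a) (T : TwoRowSYT a b) : cT T ∈ PP stpT (a+b) 0 := by
  rw [mem_PP]
  refine ⟨?_, ?_, ?_⟩
  · simp [cT, cnt_zero (R1_sub T)]
  · intro i hi
    have := cT_step hab T i hi
    simp only [stpT]; split_ifs <;> simp <;> omega
  · intro i hi; simp [cT]; omega

theorem cT_top (T : TwoRowSYT a b) : cT T (a+b) = a - b := by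
  simp [cT, cnt_top (R1_sub T), cnt_top (R2_sub T), card_R1, card_R2]

theorem T_ext {T T' : TwoRowSYT a b} (h : R1 T = R1 T') : T = T' := by
  have h2 : R2 T = R2 T' := by
    ext x
    by_cases hx : x ∈ Finset.Icc 1 (a+b)
    · rw [mem_R2_iff T (Finset.mem_Icc.1 hx).1 (Finset.mem_Icc.1 hx).2, 
        mem_R2_iff T' (Finset.mem_Icc.1 hx).1 (Finset.mem_Icc.1 hx).2, h]
    · exact ⟨fun h => absurd (R2_sub T h) hx, fun h => absurd (R2_sub T' h) hx⟩
  have e1 : T.row1 = T'.row1 := by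
    apply (StrictMono.range_inj T.mono1 T'.mono1).1
    simpa [R1, ← Finset.coe_inj] using h
  have e2 : T.row2 = T'.row2 := by
    apply (StrictMono.range_inj T.mono2 T'.mono2).1
    simpa [R2, ← Finset.coe_inj] using h2
  cases T; cases T'; simp_all

theorem T_exists (hab : b ≤ a) (c : ℕ → ℕ) (hc : c ∈ PP stpT (a+b) 0) (hN : c (a+b) = a - b) :
    ∃ T : TwoRowSYT a b, cT T = c := by
  have hc0 := (mem_PP _ _ _ _).1 hc
  set S1 := (Finset.Icc 1 (a+b)).filter (fun x => c x = c (x-1) + 1) with hS1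
  set S2 := (Finset.Icc 1 (a+b)).filter (fun x => ¬ c x = c (x-1) + 1) with hS2
  have s1 : S1 ⊆ Finset.Icc 1 (a+b) := Finset.filter_subset _ _
  have s2 : S2 ⊆ Finset.Icc 1 (a+b) := Finset.filter_subset _ _
  have hd : Disjoint S1 S2 := Finset.disjoint_filter_filter_not _ _ _
  have hu : ∀ x ∈ Finset.Icc 1 (a+b), x ∈ S1 ∨ x ∈ S2 := by
    intro x hx
    simp only [hS1, hS2, Finset.mem_filter, hx, true_and]; tauto
  have m1 : ∀ i < a + b, (i + 1 ∈ S1 ↔ c (i+1) = c i + 1) := by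
    intro i hi; simp [hS1]; omega
  have m2 : ∀ i < a + b, (i + 1 ∈ S2 ↔ ¬ c (i+1) = c i + 1) := by
    intro i hi; simp [hS2]; omega
  have hcnt : ∀ i ≤ a + b, c i + cnt S2 i = cnt S1 i ∧ cnt S1 i + cnt S2 i = i := by
    intro i
    induction i with
    | zero => intro _; simp [cnt_zero s1, cnt_zero s2, hc0.1]
    | succ i ih =>
      intro hi
      have h1 := hc0.2.1 i (by omega)
      have h2 := ih (by omega)
      rw [cnt_succ, cnt_succ]
      simp only [m1 i (by omega), m2 i (by omega)]
      simp only [stpT] at h1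
      split_ifs at h1 ⊢ <;> simp at h1 <;> omega
  have htop := hcnt (a+b) le_rfl
  rw [cnt_top s1, cnt_top s2, hN] at htop
  have c1 : S1.card = a := by omega
  have c2 : S2.card = b := by omega
  let r1 := S1.orderEmbOfFin c1
  let r2 := S2.orderEmbOfFin c2
  have i1 : Finset.univ.image r1 = S1 := by
    rw [← Finset.coe_inj]; simp [r1]
  have i2 : Finset.univ.image r2 = S2 := by
    rw [← Finset.coe_inj]; simp [r2]
  have q1 : ∀ i, r1 i ∈ S1 := fun i => Finset.orderEmbOfFin_mem _ _ _
  have q2 : ∀ i, r2 i ∈ S2 := fun i => Finset.orderEmbOfFin_mem _ _ _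
  refine ⟨⟨r1, r2, r1.strictMono, r2.strictMono, ?_, fun i => s1 (q1 i), fun i => s2 (q2 i), ?_⟩, ?_⟩
  · intro j hj
    by_contra hcon
    have hne : r1 ⟨j, hj⟩ ≠ r2 j := fun h => Finset.disjoint_left.1 hd (q1 _) (h ▸ q2 j)
    have hlt : r2 j < r1 ⟨j, hj⟩ := by omega
    have hx := Finset.mem_Icc.1 (s2 (q2 j))
    have hh := (hcnt (r2 j) hx.2).1
    have k2 : j.1 + 1 ≤ cnt S2 (r2 j) := by
      rw [← i2, cnt_image r2.strictMono]
      calc j.1 + 1 = (Finset.univ.filter (fun p : Fin b => p ≤ j)).card := by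
            rw [Finset.filter_ge_eq_Iic, Fin.card_Iic]
        _ ≤ _ := by
            apply Finset.card_le_card
            intro p; simp
    have k1 : cnt S1 (r2 j) ≤ j.1 := by
      rw [← i1, cnt_image r1.strictMono]
      calc _ ≤ (Finset.univ.filter (fun p : Fin a => p < ⟨j, hj⟩)).card := by
            apply Finset.card_le_card
            intro p; simp only [Finset.mem_filter, Finset.mem_univ, true_and]
            intro hp
            exact r1.strictMono.lt_iff_lt.1 (lt_of_le_of_lt hp hlt)
        _ = j.1 := by rw [Finset.filter_gt_eq_Iio, Fin.card_Iio]
    omega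
  · intro x hx
    rcases hu x hx with h | h
    · left; rw [← i1] at h; simpa using h
    · right; rw [← i2] at h; simpa using h
  · apply PT_ext (cT_mem hab _) hc
    intro i hi
    rw [cT_up hab _ i hi, ← m1 i hi]
    conv_rhs => rw [← i1]
    rfl

theorem Des_iff_T (hab : b ≤ a) (T : TwoRowSYT a b) (n : ℕ) (hn : n ≤ a + b) (D : Finset ℕ)
    (hD : D ⊆ Finset.Icc 1 (n-1)) :
    DesSYT T ∩ Finset.Icc 1 (n-1) = D ↔ Flags n (fun i => decide (i+1 ∈ D)) (cT T) := by
  have key : ∀ i, i + 1 < n → (i + 1 ∈ DesSYT T ∩ Finset.Icc 1 (n-1) ↔ 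
      (cT T (i+1) = cT T i + 1 ∧ cT T (i+2) ≠ cT T (i+1) + 1)) := by
    intro i hi
    rw [cT_up hab T i (by omega), Ne, cT_up hab T (i+1) (by omega), 
      ← mem_R2_iff T (by omega) (by omega)]
    simp only [DesSYT, Finset.mem_inter, Finset.mem_filter, Finset.mem_Icc, R1, R2, Finset.mem_image,
      Finset.mem_univ, true_and]
    constructor
    · rintro ⟨⟨_, h⟩, _⟩; exact h
    · intro h; exact ⟨⟨by omega, h⟩, by omega⟩
  constructor
  · intro h i hi
    rw [← key i hi, h]; simp
  · intro h
    ext x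
    by_cases hx : x ∈ Finset.Icc 1 (n-1)
    · rw [Finset.mem_Icc] at hx
      obtain ⟨x, rfl⟩ : ∃ e', x = e' + 1 := ⟨x-1, by omega⟩
      rw [key x (by omega), ← h x (by omega)]; simp
    · exact ⟨fun h => absurd (Finset.mem_inter.1 h).2 hx, fun h => absurd (hD h) hx⟩

open Classical in
theorem card_T (hab : b ≤ a) (n : ℕ) (hn : n ≤ a + b) (D : Finset ℕ) (hD : D ⊆ Finset.Icc 1 (n-1)) :
    Nat.card {T : TwoRowSYT a b // DesSYT T ∩ Finset.Icc 1 (n - 1) = D} =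
    ((PP stpT (a+b) 0).filter (fun c => Flags n (fun i => decide (i+1 ∈ D)) c ∧ c (a+b) = a - b)).card := by
  rw [← Fintype.card_coe, ← Nat.card_eq_fintype_card]
  apply Nat.card_eq_of_bijective (fun T => ⟨cT T.1, by
    rw [Finset.mem_filter]
    exact ⟨cT_mem hab _, (Des_iff_T hab _ n hn D hD).1 T.2, cT_top _⟩⟩)
  constructor
  · intro T T' h
    have h := congrArg Subtype.val h
    simp only at h
    apply Subtype.ext
    apply T_ext
    ext x
    by_cases hx : x ∈ Finset.Icc 1 (a+b)
    · rw [Finset.mem_Icc] at hx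
      obtain ⟨x, rfl⟩ : ∃ e', x = e' + 1 := ⟨x-1, by omega⟩
      rw [← cT_up hab _ x (by omega), ← cT_up hab _ x (by omega), h]
    · exact ⟨fun h => absurd (R1_sub _ h) hx, fun h => absurd (R1_sub _ h) hx⟩
  · rintro ⟨c, hc⟩
    rw [Finset.mem_filter] at hc
    obtain ⟨T, rfl⟩ := T_exists hab c hc.1 hc.2.2
    exact ⟨⟨T, (Des_iff_T hab _ n hn D hD).2 hc.2.1⟩, rfl⟩
end tab


section perm
variable {n : ℕ}

noncomputable def mP (π : Equiv.Perm (Fin n)) (i : ℕ) : ℕ :=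
  if i < n then sInf {v : ℕ | ∃ j : Fin n, i ≤ (j : ℕ) ∧ ((π j : Fin n) : ℕ) = v} else i

noncomputable def cP (π : Equiv.Perm (Fin n)) (i : ℕ) : ℕ := i - mP π i

theorem mP_le (π : Equiv.Perm (Fin n)) (i : ℕ) (j : Fin n) (h : i ≤ j) : mP π i ≤ π j := by
  rw [mP, if_pos (by omega)]
  exact Nat.sInf_le ⟨j, h, rfl⟩

theorem mP_att (π : Equiv.Perm (Fin n)) (i : ℕ) (hi : i < n) : ∃ j : Fin n, i ≤ (j : ℕ) ∧ (π j : ℕ) = mP π i := by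
  rw [mP, if_pos hi]
  exact Nat.sInf_mem (s := {v : ℕ | ∃ j : Fin n, i ≤ (j : ℕ) ∧ ((π j : Fin n) : ℕ) = v}) ⟨_, ⟨i, hi⟩, le_rfl, rfl⟩

theorem mP_ge (π : Equiv.Perm (Fin n)) (i : ℕ) (hi : n ≤ i) : mP π i = i := by
  rw [mP, if_neg (by omega)]

theorem mP_le_self (π : Equiv.Perm (Fin n)) (i : ℕ) : mP π i ≤ i := by
  by_cases hi : i < n
  · by_contra hcon
    have h : (Finset.Iic (⟨i, hi⟩ : Fin n)).card ≤ (Finset.Iio (⟨i, hi⟩ : Fin n)).card := by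
      apply Finset.card_le_card_of_injOn π.symm
      · intro v hv
        simp only [Finset.coe_Iic, Set.mem_Iic, Finset.coe_Iio, Set.mem_Iio, Fin.le_def, Fin.lt_def] at hv ⊢
        by_contra h2
        have := mP_le π i (π.symm v) (by omega)
        rw [Equiv.apply_symm_apply] at this
        omega
      · exact π.symm.injective.injOn
    rw [Fin.card_Iic, Fin.card_Iio] at h
    simp at h
  · rw [mP_ge _ _ (by omega)]

theorem mP_mono (π : Equiv.Perm (Fin n)) (i : ℕ) : mP π i ≤ mP π (i+1) := by
  by_cases hi : i + 1 < n
  · obtain ⟨j, hj, h⟩ := mP_att π (i+1) hi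
    rw [← h]; exact mP_le π i j (by omega)
  · rw [mP_ge π (i+1) (by omega)]
    exact (mP_le_self π i).trans (by omega)

theorem cP_mem (π : Equiv.Perm (Fin n)) : cP π ∈ PP stpL n 0 := by
  rw [mem_PP]
  refine ⟨by simp [cP], ?_, ?_⟩
  · intro i hi
    have := mP_mono π i
    simp [stpL, cP]; omega
  · intro i hi
    simp [cP, mP_ge π i (by omega)]

theorem cP_top (π : Equiv.Perm (Fin n)) : cP π n = 0 := by simp [cP, mP_ge π n le_rfl]

theorem perm_stable (π : Equiv.Perm (Fin n)) (s : Finset (Fin n)) (h : ∀ j ∈ s, π j ∈ s) :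
    ∀ j, j ∉ s → π j ∉ s := by
  intro j hj hp
  have : s.map π.toEmbedding = s := by
    apply Finset.eq_of_subset_of_card_le
    · intro x hx
      rw [Finset.mem_map] at hx
      obtain ⟨y, hy, rfl⟩ := hx
      exact h y hy
    · simp
  rw [← this, Finset.mem_map] at hp
  obtain ⟨y, hy, h2⟩ := hp
  exact hj (π.injective h2 ▸ hy)

theorem block_iff (π : Equiv.Perm (Fin n)) (i : Fin n) : (∀ j, j ≤ i → π j ≤ i) ↔ cP π (i+1) = 0 := by
  have e : cP π (i+1) = 0 ↔ i + 1 ≤ mP π (i+1) := by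
    simp only [cP]; omega
  rw [e]
  constructor
  · intro h
    by_cases hi : (i:ℕ) + 1 < n
    · obtain ⟨j, hj, h2⟩ := mP_att π (i+1) hi
      rw [← h2]
      have := perm_stable π (Finset.Iic i) (by simpa using h) j (by simp only [Finset.mem_Iic, Fin.le_def]; omega)
      simp only [Finset.mem_Iic, Fin.le_def] at this; omega
    · rw [mP_ge _ _ (by omega)]
  · intro h j hj
    have := perm_stable π (Finset.Ioi i) (by
      intro j hj
      simp only [Finset.mem_Ioi, Fin.lt_def] at hj ⊢
      have := mP_le π (i+1) j (by omega)
      omega) j (by simpa using hj)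
    simpa using this

theorem blockNum_eq (π : Equiv.Perm (Fin n)) :
    ((Finset.range n).filter (fun i => cP π i = 0)).card = blockNum π := by
  have h1 : blockNum π = ∑ i ∈ Finset.range n, if cP π (i+1) = 0 then 1 else 0 := by
    rw [blockNum, Finset.card_filter, ← Fin.sum_univ_eq_sum_range (fun i => if cP π (i+1) = 0 then 1 else 0)]
    apply Finset.sum_congr rfl
    intro i _
    simp only [block_iff]
  have h2 := Finset.sum_range_succ (fun i => if cP π i = 0 then 1 else 0) n
  have h3 := Finset.sum_range_succ' (fun i => if cP π i = 0 then 1 else 0) n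
  have h0 : cP π 0 = 0 := by simp [cP]
  rw [cP_top] at h2
  rw [h0] at h3
  rw [h1, Finset.card_filter]
  omega

theorem rmin_iff (π : Equiv.Perm (Fin n)) (i : Fin n) : (π i : ℕ) = mP π i ↔ mP π (i+1) ≠ mP π i := by
  constructor
  · intro h h2
    by_cases hi : (i:ℕ) + 1 < n
    · obtain ⟨j, hj, h3⟩ := mP_att π (i+1) hi
      rw [h2, ← h] at h3
      have := π.injective (Fin.ext h3)
      subst this; omega
    · rw [mP_ge _ _ (by omega)] at h2
      have := (π i).2
      omega
  · intro h
    obtain ⟨j, hj, h3⟩ := mP_att π i i.2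
    by_cases hji : j = i
    · rw [← h3, hji]
    · exfalso
      have h4 : (j : ℕ) ≠ i := fun h => hji (Fin.ext h)
      have := mP_le π (i+1) j (by omega)
      have := mP_mono π i
      omega

theorem des_iff (π : Equiv.Perm (Fin n)) (hA : Avoids321 π) (i : ℕ) (hi : i + 1 < n) :
    i + 1 ∈ DesSet π ↔ (cP π (i+1) = cP π i + 1 ∧ cP π (i+2) ≠ cP π (i+1) + 1) := by
  have l0 := mP_le_self π i
  have l1 := mP_le_self π (i+1)
  have l2 := mP_le_self π (i+2)
  have e1 : cP π (i+1) = cP π i + 1 ↔ ¬ mP π (i+1) ≠ mP π i := by simp only [cP]; omega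
  have e2 : cP π (i+2) ≠ cP π (i+1) + 1 ↔ mP π (i+2) ≠ mP π (i+1) := by simp only [cP]; omega
  have r1 := rmin_iff π ⟨i, by omega⟩
  have r2 := rmin_iff π ⟨i+1, hi⟩
  simp only at r1 r2
  rw [e1, e2, ← r1, ← r2]
  have e3 : i + 1 ∈ DesSet π ↔ π ⟨i+1, hi⟩ < π ⟨i, by omega⟩ := by
    simp only [DesSet, Finset.mem_image, Finset.mem_filter, Finset.mem_univ, true_and]
    constructor
    · rintro ⟨j, ⟨h, h2⟩, h3⟩
      have hji : i = j.1 := by omega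
      subst hji
      exact h2
    · intro h; exact ⟨⟨i, by omega⟩, ⟨hi, h⟩, rfl⟩
  rw [e3]
  constructor
  · intro h
    rw [Fin.lt_def] at h
    have h1 := mP_le π i ⟨i+1, hi⟩ (by simp)
    refine ⟨by omega, ?_⟩
    by_contra h2
    obtain ⟨j, hj, h3⟩ := mP_att π (i+1) hi
    have h4 := mP_le π (i+1) ⟨i+1, hi⟩ (by simp)
    have h5 : (j : ℕ) ≠ i + 1 := by
      intro h6
      obtain rfl : j = ⟨i+1, hi⟩ := Fin.ext h6
      exact h2 h3
    refine hA ⟨i, by omega⟩ ⟨i+1, hi⟩ j ?_ ?_ ⟨?_, ?_⟩ <;> simp only [Fin.lt_def] <;> omega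
  · rintro ⟨h1, h2⟩
    have h3 : mP π (i+1) = mP π i := by
      by_contra h; exact h1 (r1.2 h)
    have h4 := mP_le π i ⟨i, by omega⟩ le_rfl
    rw [Fin.lt_def]; omega

theorem Des_iff_P (π : Equiv.Perm (Fin n)) (hA : Avoids321 π) (D : Finset ℕ)
    (hD : D ⊆ Finset.Icc 1 (n-1)) :
    DesSet π = D ↔ Flags n (fun i => decide (i+1 ∈ D)) (cP π) := by
  constructor
  · intro h i hi
    rw [← des_iff π hA i hi, h]; simp
  · intro h
    ext x
    by_cases hx : x ∈ Finset.Icc 1 (n-1)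
    · rw [Finset.mem_Icc] at hx
      obtain ⟨x, rfl⟩ : ∃ e', x = e' + 1 := ⟨x-1, by omega⟩
      rw [des_iff π hA x (by omega), ← h x (by omega)]; simp
    · refine ⟨fun h => ?_, fun h => absurd (hD h) hx⟩
      exfalso; apply hx
      simp only [DesSet, Finset.mem_image, Finset.mem_filter, Finset.mem_univ, true_and] at h
      obtain ⟨j, ⟨h, h2⟩, h3⟩ := h
      rw [Finset.mem_Icc]; omega

theorem half_inj (π σ : Equiv.Perm (Fin n)) (hA : Avoids321 π) (hm : ∀ i, mP π i = mP σ i) (i : Fin n)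
    (hgt : ∀ j, i < j → π j = σ j) (hlt : π i < σ i) : False := by
  have h1 : (π i : ℕ) ≠ mP π i := by
    intro h
    have h2 := (rmin_iff π i).1 h
    rw [hm, hm] at h2
    have h3 := (rmin_iff σ i).2 h2
    rw [← hm, ← h] at h3
    rw [Fin.lt_def] at hlt; omega
  obtain ⟨j, hj, h3⟩ := mP_att π i i.2
  have h4 := mP_le π i i le_rfl
  have h5 : j ≠ i := by rintro rfl; exact h1 h3
  have h6 : (j : ℕ) ≠ i := fun h => h5 (Fin.ext h)
  have hi' : π (π.symm (σ i)) = σ i := Equiv.apply_symm_apply _ _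
  set i' := π.symm (σ i)
  have h7 : i' < i := by
    rcases lt_trichotomy i' i with h | h | h
    · exact h
    · rw [h] at hi'; rw [hi'] at hlt; exact absurd hlt (lt_irrefl _)
    · have := hgt i' h
      rw [hi'] at this
      exact absurd (σ.injective this) (ne_of_lt h)
  refine hA i' i j h7 ?_ ⟨?_, ?_⟩
  · rw [Fin.lt_def]; omega
  · rw [Fin.lt_def]; omega
  · rw [hi']; exact hlt

theorem cP_inj (π σ : Equiv.Perm (Fin n)) (hA : Avoids321 π) (hB : Avoids321 σ) (h : cP π = cP σ) : π = σ := by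
  have hm : ∀ i, mP π i = mP σ i := by
    intro i
    have h1 := mP_le_self π i
    have h2 := mP_le_self σ i
    have := congrFun h i
    simp only [cP] at this; omega
  ext i
  congr 1
  induction i using WellFoundedGT.induction with
  | ind i ih =>
    rcases lt_trichotomy (π i) (σ i) with h1 | h1 | h1
    · exact (half_inj π σ hA hm i ih h1).elim
    · exact h1
    · exact (half_inj σ π hB (fun i => (hm i).symm) i (fun j hj => (ih j hj).symm) h1).elim

theorem P_exists (c : ℕ → ℕ) (hc : c ∈ PP stpL n 0) (hN : c n = 0) :
    ∃ π : Equiv.Perm (Fin n), Avoids321 π ∧ cP π = c := by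
  rw [mem_PP] at hc
  obtain ⟨h0, hst, hz⟩ := hc
  have hle : ∀ i ≤ n, c i ≤ i := by
    intro i
    induction i with
    | zero => intro _; omega
    | succ i ih =>
      intro hi
      have h1 := hst i (by omega)
      have := ih (by omega)
      simp [stpL] at h1; omega
  obtain ⟨m, hm⟩ : ∃ m : ℕ → ℕ, ∀ i, m i = i - c i := ⟨_, fun _ => rfl⟩
  have hm1 : ∀ i < n, m i ≤ m (i+1) := by
    intro i hi
    have h1 := hst i hi
    simp [stpL] at h1
    rw [hm, hm]; omega
  have hmn : m n = n := by rw [hm, hN]; omega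
  have hmm : ∀ i j, i ≤ j → j ≤ n → m i ≤ m j := by
    intro i j hij
    induction j, hij using Nat.le_induction with
    | base => intro _; exact le_rfl
    | succ j hj ih => intro h; exact (ih (by omega)).trans (hm1 j (by omega))
  have hms : ∀ i, m i ≤ i := by intro i; rw [hm]; omega
  let mF : Fin n → Fin n := fun i => ⟨m i, lt_of_le_of_lt (hms i) i.2⟩
  let R : Finset (Fin n) := Finset.univ.filter (fun i => m i < m (i+1))
  have hR : ∀ i : Fin n, i ∈ R ↔ m i < m (i+1) := by intro i; simp [R]
  have hRlt : ∀ i j : Fin n, i ∈ R → i < j → m i < m j := by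
    intro i j hi hij
    rw [Fin.lt_def] at hij
    exact lt_of_lt_of_le ((hR i).1 hi) (hmm _ _ (by omega) (by omega))
  have hinj : Set.InjOn mF R := by
    intro i hi j hj hij
    have hij' : m i = m j := congrArg Fin.val hij
    rcases lt_trichotomy i j with h | h | h
    · have := hRlt i j hi h; omega
    · exact h
    · have := hRlt j i hj h; omega
  let I : Finset (Fin n) := R.image mF
  have hcard : (Iᶜ).card = (Rᶜ).card := by
    rw [Finset.card_compl, Finset.card_compl, Finset.card_image_of_injOn hinj]
  let e : (Rᶜ : Finset (Fin n)) ≃o (Iᶜ : Finset (Fin n)) :=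
    ((Rᶜ).orderIsoOfFin rfl).symm.trans ((Iᶜ).orderIsoOfFin hcard)
  let p : Fin n → Fin n := fun i => if h : i ∈ R then mF i else (e ⟨i, Finset.mem_compl.2 h⟩ : Fin n)
  have pR : ∀ i, i ∈ R → (p i : ℕ) = m i := by intro i hi; simp only [p, dif_pos hi, mF]
  have pI : ∀ i, i ∈ R → p i ∈ I := by
    intro i hi; simp only [p, dif_pos hi]; exact Finset.mem_image_of_mem _ hi
  have pN : ∀ i, i ∉ R → p i ∉ I := by
    intro i hi; simp only [p, dif_neg hi]; exact Finset.mem_compl.1 (e _).2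
  have plt : ∀ i j, i ∉ R → j ∉ R → i < j → p i < p j := by
    intro i j hi hj hij
    simp only [p, dif_neg hi, dif_neg hj]
    have : e ⟨i, Finset.mem_compl.2 hi⟩ < e ⟨j, Finset.mem_compl.2 hj⟩ := e.strictMono hij
    exact this
  have pinj : Function.Injective p := by
    intro i j hij
    by_cases hi : i ∈ R
    · by_cases hj : j ∈ R
      · apply hinj hi hj
        apply Fin.ext
        change m i = m j
        rw [← pR i hi, ← pR j hj, hij]
      · exact absurd (hij ▸ pI i hi) (pN j hj)
    · by_cases hj : j ∈ R
      · exact absurd (hij ▸ pI j hj) (pN i hi)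
      · rcases lt_trichotomy i j with h | h | h
        · exact absurd hij (ne_of_lt (plt i j hi hj h))
        · exact h
        · exact absurd hij.symm (ne_of_lt (plt j i hj hi h))
  have hge : ∀ i : Fin n, m i ≤ p i := by
    intro i
    by_contra hcon
    have hiR : i ∉ R := fun h => hcon (pR i h).ge
    have h : (Finset.Iic i).card ≤ (Finset.range (m i)).card := by
      apply Finset.card_le_card_of_injOn (fun j => (p j : ℕ))
      · intro j hj
        simp only [Finset.coe_Iic, Set.mem_Iic, Finset.coe_range, Set.mem_Iio] at hj ⊢
        by_cases hjR : j ∈ R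
        · rw [pR j hjR]
          apply hRlt j i hjR
          exact lt_of_le_of_ne hj (fun h => hiR (h ▸ hjR))
        · rcases eq_or_lt_of_le hj with h | h
          · rw [h]; omega
          · have := plt j i hjR hiR h
            rw [Fin.lt_def] at this; omega
      · intro x _ y _ hxy; exact pinj (Fin.ext hxy)
    rw [Fin.card_Iic, Finset.card_range] at h
    have := hms i
    omega
  have hlast : ∀ t i, i + t + 1 = n → ∃ j : Fin n, i ≤ (j : ℕ) ∧ j ∈ R ∧ m j = m i := by
    intro t
    induction t with
    | zero =>
      intro i hi
      refine ⟨⟨i, by omega⟩, le_rfl, ?_, rfl⟩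
      rw [hR]
      change m i < m (i+1)
      have := hms i
      rw [show i + 1 = n by omega, hmn]; omega
    | succ t ih =>
      intro i hi
      by_cases h : m i < m (i+1)
      · exact ⟨⟨i, by omega⟩, le_rfl, (hR _).2 h, rfl⟩
      · obtain ⟨j, h1, h2, h3⟩ := ih (i+1) (by omega)
        have := hm1 i (by omega)
        exact ⟨j, by omega, h2, by omega⟩
  refine ⟨Equiv.ofBijective p (Finite.injective_iff_bijective.1 pinj), ?_, ?_⟩
  · intro i j k hij hjk
    simp only [Equiv.ofBijective_apply]
    rintro ⟨h1, h2⟩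
    have hj : j ∉ R := by
      intro h
      have e1 := pR j h
      have e2 := hmm j k (by omega) (by omega)
      have e3 := hge k
      rw [Fin.lt_def] at h1; omega
    have hi : i ∉ R := by
      intro h
      have e1 := pR i h
      have e2 := hmm i j (by omega) (by omega)
      have e3 := hge j
      rw [Fin.lt_def] at h2; omega
    exact absurd h2 (not_lt.2 (plt i j hi hj hij).le)
  · ext i
    by_cases hi : i < n
    · have key : mP (Equiv.ofBijective p (Finite.injective_iff_bijective.1 pinj)) i = m i := by
        apply le_antisymm
        · obtain ⟨j, h1, h2, h3⟩ := hlast (n - 1 - i) i (by omega)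
          rw [← h3, ← pR j h2]
          exact mP_le _ i j h1
        · obtain ⟨j, h1, h2⟩ := mP_att (Equiv.ofBijective p (Finite.injective_iff_bijective.1 pinj)) i hi
          rw [← h2]
          exact (hmm i j h1 (by omega)).trans (hge j)
      rw [cP, key, hm]
      have := hle i (by omega)
      omega
    · rw [cP, mP_ge _ _ (by omega)]
      rcases eq_or_lt_of_le (not_lt.1 hi) with h | h
      · rw [← h, hN]; omega
      · rw [hz i h]; omega

open Classical in
theorem card_P (k : ℕ) (D : Finset ℕ) (hD : D ⊆ Finset.Icc 1 (n-1)) :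
    Nat.card {π : Equiv.Perm (Fin n) // Avoids321 π ∧ blockNum π = k ∧ DesSet π = D} =
    ((PP stpL n 0).filter (fun c => Flags n (fun i => decide (i+1 ∈ D)) c ∧ c n = 0 ∧
      ((Finset.range n).filter (fun i => c i = 0)).card = k)).card := by
  rw [← Fintype.card_coe, ← Nat.card_eq_fintype_card]
  apply Nat.card_eq_of_bijective (fun π => ⟨cP π.1, by
    rw [Finset.mem_filter]
    exact ⟨cP_mem _, (Des_iff_P _ π.2.1 D hD).1 π.2.2.2, cP_top _, (blockNum_eq _).trans π.2.2.1⟩⟩)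
  constructor
  · intro T T' h
    have h := congrArg Subtype.val h
    exact Subtype.ext (cP_inj _ _ T.2.1 T'.2.1 h)
  · rintro ⟨c, hc⟩
    rw [Finset.mem_filter] at hc
    obtain ⟨π, hA, rfl⟩ := P_exists c hc.1 hc.2.2.1
    exact ⟨⟨π, hA, (blockNum_eq _).symm.trans hc.2.2.2, (Des_iff_P _ hA D hD).2 hc.2.1⟩, rfl⟩

theorem block_full (π : Equiv.Perm (Fin n)) : blockNum π = n ↔ π = 1 := by
  constructor
  · intro h
    have h1 : (Finset.univ.filter (fun i : Fin n => ∀ j, j ≤ i → π j ≤ i)) = Finset.univ := by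
      rw [← Finset.card_eq_iff_eq_univ, Fintype.card_fin]; exact h
    have h2 : ∀ i, π i ≤ i := by
      intro i
      have : i ∈ (Finset.univ.filter (fun i : Fin n => ∀ j, j ≤ i → π j ≤ i)) := by rw [h1]; simp
      exact (Finset.mem_filter.1 this).2 i le_rfl
    ext i
    congr 1
    induction i using WellFoundedLT.induction with
    | ind i ih =>
      rcases eq_or_lt_of_le (h2 i) with h3 | h3
      · exact h3
      · have := ih _ h3
        exact absurd (π.injective this) (ne_of_lt h3)
  · rintro rfl
    rw [blockNum, Finset.filter_true_of_mem (by intro i _ j h; exact h)]; simp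

theorem case_full (D : Finset ℕ) :
    Nat.card {π : Equiv.Perm (Fin n) // Avoids321 π ∧ blockNum π = n ∧ DesSet π = D} =
      Nat.card {T : TwoRowSYT (n - 1) (n - n) // DesSYT T ∩ Finset.Icc 1 (n - 1) = D} := by
  have hdes : DesSet (1 : Equiv.Perm (Fin n)) = ∅ := by
    rw [DesSet, Finset.image_eq_empty, Finset.filter_eq_empty_iff]
    rintro i _ ⟨h, h2⟩
    simp [Fin.lt_def] at h2
  have hav : Avoids321 (1 : Equiv.Perm (Fin n)) := by
    rintro i j k hij hjk ⟨h1, h2⟩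
    exact absurd (lt_trans hij hjk) (not_lt.2 (lt_trans h1 h2).le)
  rw [Nat.sub_self]
  have hdT : ∀ T : TwoRowSYT (n-1) 0, DesSYT T = ∅ := by
    intro T
    rw [DesSYT, Finset.filter_eq_empty_iff]
    rintro i _ ⟨_, q, _⟩
    exact q.elim0
  by_cases hD : D = ∅
  · subst hD
    have u1 : Nat.card {π : Equiv.Perm (Fin n) // Avoids321 π ∧ blockNum π = n ∧ DesSet π = ∅} = 1 := by
      rw [Nat.card_eq_one_iff_unique]
      refine ⟨⟨fun a b => Subtype.ext ?_⟩, ⟨⟨1, hav, (block_full 1).2 rfl, hdes⟩⟩⟩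
      rw [(block_full a.1).1 a.2.2.1, (block_full b.1).1 b.2.2.1]
    rw [u1]; symm
    rw [Nat.card_eq_one_iff_unique]
    refine ⟨⟨fun a b => Subtype.ext (T_ext ?_)⟩, ⟨⟨⟨fun i => i + 1, fun i => i.elim0, ?_, ?_, ?_, ?_, ?_, ?_⟩, ?_⟩⟩⟩
    · have h := fun T : TwoRowSYT (n-1) 0 => R_union T
      have h2 : ∀ T : TwoRowSYT (n-1) 0, R2 T = ∅ := by intro T; simp [R2]
      simp only [h2, Finset.union_empty] at h
      rw [h, h]
    · intro i j hij; simpa using hij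
    · intro i; exact i.elim0
    · intro i; exact i.elim0
    · intro i; rw [Finset.mem_Icc]; omega
    · intro i; exact i.elim0
    · intro x hx
      left
      rw [Finset.mem_Icc] at hx
      exact ⟨⟨x-1, by omega⟩, Nat.sub_add_cancel hx.1⟩
    · rw [hdT]; simp
  · have i1 : IsEmpty {π : Equiv.Perm (Fin n) // Avoids321 π ∧ blockNum π = n ∧ DesSet π = D} := by
      constructor
      rintro ⟨π, _, h2, h3⟩
      rw [(block_full π).1 h2, hdes] at h3
      exact hD h3.symm
    have i2 : IsEmpty {T : TwoRowSYT (n - 1) 0 // DesSYT T ∩ Finset.Icc 1 (n - 1) = D} := by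
      constructor
      rintro ⟨T, h⟩
      rw [hdT, Finset.empty_inter] at h
      exact hD h.symm
    rw [Nat.card_of_isEmpty, Nat.card_of_isEmpty]
end perm

end BLD


/-- The 321-avoiding permutations with `k` blocks and descent set `D` are
equinumerous with the standard Young tableaux of shape `(n-1, n-k)` whose descent
set intersected with `[n-1]` is `D`. -/
theorem card_blockNum_des_eq_card_SYT (n k : ℕ) (h1 : 1 ≤ k) (h2 : k ≤ n)
    (D : Finset ℕ) (hD : D ⊆ Finset.Icc 1 (n - 1)) :
    Nat.card {π : Equiv.Perm (Fin n) // Avoids321 π ∧ blockNum π = k ∧ DesSet π = D} =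
      Nat.card {T : TwoRowSYT (n - 1) (n - k) // DesSYT T ∩ Finset.Icc 1 (n - 1) = D} := by
  classical
  rcases eq_or_lt_of_le h2 with h | h
  · subst h; exact BLD.case_full D
  · rw [BLD.card_P k D hD, BLD.card_T (by omega) n (by omega) D hD,
      BLD.main_count n k (n-1-k) (by omega) h1 (by omega) (fun i => decide (i+1 ∈ D))]
    have e1 : n - 1 + (n - k) = n - 1 - k + n := by omega
    have e2 : n - 1 - (n - k) = k - 1 := by omega
    rw [e1, e2]
end
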